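/- Fix integers p ≥ 2 and 0 ≤ d < 2p−2. Let 𝒜 be the symmetric (d+2)×(d+2) integer matrix with rows/columns indexed by {+, −, 0, 1, ..., d−1}, with entries 𝒜_{++} = 𝒜_{−−} = p, 𝒜_{+−} = −p+d+1, 𝒜_{±,j} = j+1 for 0 ≤ j ≤ d−1, and 𝒜_{ij} = 2·min(i+1, j+1) for 0 ≤ i,j ≤ d−1. Let N = (N_+, N_−; N_0, ..., N_{d−1}) ∈ ℤ^{d+2}, set N' = (N_0, ..., N_{d−1}, N_+ + N_−), and let L = N' · T_{d+1} where T_m is the tridiagonal matrix with 2's on the diagonal (except last entry 1) and −1's off-diagonal, so that (T_m⁻¹)_{ij} = min(i,j). Suppose L_i ≥ 0 for all i. Then Σ_{n ∈ ℤ^{d+2}} z^{n_+ − n_−} q^{(1/2) n 𝒜 nᵀ} Π_{a} [e_a·(N + n − n𝒜), e_a·n]⁺_q = Σ_{a ∈ ℤ} z^a q^{p a²/2} S^{(d+2)}(L, pa + N_−)_q, where S denotes the q-supernomial coefficient, and both sides are well-defined finite sums. -/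

import Mathlib

noncomputable section

/-- The ring `ℤ[q^{1/2}, q^{-1/2}, z, z^{-1}]`: the monomial `(a,b)` stands for
`q^{a/2} z^b`. -/
abbrev LL := AddMonoidAlgebra ℤ (ℤ × ℤ)

/-- `Qh a = q^{a/2}`. -/
def Qh (a : ℤ) : LL := AddMonoidAlgebra.single (a, 0) 1

/-- `Zv b = z^b`. -/
def Zv (b : ℤ) : LL := AddMonoidAlgebra.single (0, b) 1

def gaussRecL (v : LL) : ℕ → ℕ → LL
  | 0, 0 => 1
  | 0, _ + 1 => 0
  | _ + 1, 0 => 1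
  | n + 1, m + 1 => gaussRecL v n (m + 1) * v ^ (m + 1) + gaussRecL v n m

def gaussZL (v : LL) (n m : ℤ) : LL :=
  if 0 ≤ m ∧ m ≤ n then gaussRecL v n.toNat m.toNat else 0

/-- The Gaussian binomial `[n m]_q`, with `q = Qh 2`. -/
def qbinL (n m : ℤ) : LL := gaussZL (Qh 2) n m

/-- The extended q-binomial `[n m]⁺_q`. -/
def qbinPlusL (n m : ℤ) : LL :=
  if 0 ≤ n then qbinL n m
  else (-1) ^ (n - m).natAbs * Qh (-((n - m) ^ 2 + (n - m))) *
    gaussZL (Qh (-2)) (-m - 1) (-n - 1)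


/-- The symmetric `(d+2) × (d+2)` matrix `𝒜`, with indices `0 ↦ +`, `1 ↦ −`,
`i+2 ↦ i` for `0 ≤ i ≤ d-1`. -/
def Amat (p d : ℕ) : Matrix (Fin (d + 2)) (Fin (d + 2)) ℤ := fun i j =>
  if (i : ℕ) = 0 ∧ (j : ℕ) = 0 then (p : ℤ)
  else if (i : ℕ) = 1 ∧ (j : ℕ) = 1 then (p : ℤ)
  else if ((i : ℕ) = 0 ∧ (j : ℕ) = 1) ∨ ((i : ℕ) = 1 ∧ (j : ℕ) = 0) then -(p : ℤ) + d + 1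
  else if (i : ℕ) ≤ 1 then (j : ℤ) - 1
  else if (j : ℕ) ≤ 1 then (i : ℤ) - 1
  else 2 * min ((i : ℤ) - 1) ((j : ℤ) - 1)

/-- The tridiagonal matrix `T_m` with diagonal `(2, ..., 2, 1)` and `-1` on the
off-diagonals, so that `(T_m⁻¹)_{ij} = min(i,j)`. -/
def Tmat (m : ℕ) : Matrix (Fin m) (Fin m) ℤ := fun i j =>
  if i = j then (if (i : ℕ) = m - 1 then 1 else 2)
  else if (i : ℕ) + 1 = (j : ℕ) ∨ (j : ℕ) + 1 = (i : ℕ) then -1 else 0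

/-- `N' = (N_0, ..., N_{d-1}, N_+ + N_-)`. -/
def Nprime (d : ℕ) (N : Fin (d + 2) → ℤ) : Fin (d + 1) → ℤ := fun i =>
  if h : (i : ℕ) < d then N ⟨(i : ℕ) + 2, by omega⟩ else N 0 + N 1

/-- `L = N' T_{d+1}` (as a row vector times the matrix); `Lvec d N j` is `L_{j+1}`. -/
def Lvec (d : ℕ) (N : Fin (d + 2) → ℤ) : Fin (d + 1) → ℤ := fun j =>
  ∑ i, Nprime d N i * Tmat (d + 1) i j

/-- `(n𝒜)_a = Σ_j n_j 𝒜_{ja}`. -/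
def rowA (p d : ℕ) (n : Fin (d + 2) → ℤ) (a : Fin (d + 2)) : ℤ :=
  ∑ j, n j * Amat p d j a

/-- The q-supernomial coefficient `S^{(k+1)}(L, a)` with `q = Qh 2`, for an integer
vector `L` (the Gaussian binomials vanish on negative tops). -/
def qSupL {k : ℕ} (L : Fin k → ℤ) (a : ℤ) : LL :=
  ∑ᶠ n : Fin k → ℤ,
    if (∑ i, n i) = a then
      Qh (2 * ∑ i : Fin k,
          if hi : (i : ℕ) + 1 < k then
            n i * (-(n ⟨(i : ℕ) + 1, hi⟩) +
              ∑ j ∈ Finset.univ.filter (fun j : Fin k => i < j), L j)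
          else 0) *
        ∏ i : Fin k,
          qbinL (L i + (if hi : (i : ℕ) + 1 < k then n ⟨(i : ℕ) + 1, hi⟩ else 0)) (n i)
    else 0


/-! ### Basic facts -/

theorem Qh_add (a b : ℤ) : Qh (a + b) = Qh a * Qh b := by
  simp [Qh, AddMonoidAlgebra.single_mul_single]

theorem Qh_zero : Qh 0 = 1 := rfl

theorem Zv_add (a b : ℤ) : Zv (a + b) = Zv a * Zv b := by
  simp [Zv, AddMonoidAlgebra.single_mul_single]

theorem Qh_pow (a : ℤ) (n : ℕ) : Qh a ^ n = Qh (a * n) := by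
  induction n with
  | zero => simp [Qh_zero]
  | succ n ih => rw [pow_succ, ih, ← Qh_add]; congr 1; push_cast; ring

theorem Qh_inj {a b : ℤ} (h : Qh a = Qh b) : a = b := by
  unfold Qh at h
  have := (AddMonoidAlgebra.single_left_inj (one_ne_zero (α := ℤ))).1 h
  simpa using this

theorem Qh_one_sub_ne (a : ℤ) (ha : a ≠ 0) : (1 : LL) - Qh a ≠ 0 := by
  intro h
  rw [sub_eq_zero, ← Qh_zero] at h
  exact ha (Qh_inj h).symm

theorem Qh_mul_eq_zero {a : ℤ} {x : LL} (h : Qh a * x = 0) : x = 0 := by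
  have : Qh (-a) * (Qh a * x) = 0 := by rw [h, mul_zero]
  rwa [← mul_assoc, ← Qh_add, neg_add_cancel, Qh_zero, one_mul] at this

theorem gaussRecL_zero (v : LL) (n : ℕ) : gaussRecL v n 0 = 1 := by
  cases n <;> simp [gaussRecL]

theorem gaussRecL_lt (v : LL) (n m : ℕ) (h : n < m) : gaussRecL v n m = 0 := by
  induction n generalizing m with
  | zero => cases m with
    | zero => omega
    | succ m => simp [gaussRecL]
  | succ n ih => cases m with
    | zero => omega
    | succ m => simp [gaussRecL, ih (m + 1) (by omega), ih m (by omega)]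

theorem gaussZL_nat (v : LL) (n m : ℕ) : gaussZL v n m = gaussRecL v n m := by
  unfold gaussZL
  split_ifs with h
  · simp
  · rw [gaussRecL_lt]; omega

theorem gaussZL_neg (v : LL) (n m : ℤ) (h : m < 0) : gaussZL v n m = 0 := by
  unfold gaussZL; rw [if_neg]; omega

theorem gaussZL_lt (v : LL) (n m : ℤ) (h : n < m) : gaussZL v n m = 0 := by
  unfold gaussZL; rw [if_neg]; omega

theorem gaussZL_zero_right (v : LL) (n : ℤ) (h : 0 ≤ n) : gaussZL v n 0 = 1 := by
  lift n to ℕ using h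
  have := gaussZL_nat v n 0
  rw [gaussRecL_zero] at this; simpa using this

theorem gaussZL_P2 (c : ℤ) (n m : ℤ) (hn : 0 ≤ n) :
    gaussZL (Qh c) (n + 1) m = Qh (c * m) * gaussZL (Qh c) n m + gaussZL (Qh c) n (m - 1) := by
  lift n to ℕ using hn
  rcases lt_trichotomy m 0 with h | h | h
  · rw [gaussZL_neg _ _ _ h, gaussZL_neg _ _ _ h, gaussZL_neg _ _ _ (by omega)]; simp
  · subst h
    rw [gaussZL_neg _ _ (0 - 1) (by omega), gaussZL_zero_right _ _ (by omega),
      gaussZL_zero_right _ _ (by omega)]; simp [Qh_zero]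
  · obtain ⟨k, rfl⟩ : ∃ k : ℕ, m = ((k + 1 : ℕ) : ℤ) := ⟨(m - 1).toNat, by omega⟩
    have e1 : ((n : ℤ) + 1) = ((n + 1 : ℕ) : ℤ) := by push_cast; ring
    have e2 : (((k + 1 : ℕ) : ℤ) - 1) = ((k : ℕ) : ℤ) := by push_cast; ring
    rw [e1, e2, gaussZL_nat, gaussZL_nat, gaussZL_nat, gaussRecL, Qh_pow, mul_comm]

theorem gaussZL_zero_left (v : LL) (m : ℤ) : gaussZL v 0 m = if m = 0 then 1 else 0 := by
  split_ifs with h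
  · subst h; exact gaussZL_zero_right _ _ le_rfl
  · rcases lt_or_gt_of_ne h with h | h
    · exact gaussZL_neg _ _ _ h
    · exact gaussZL_lt _ _ _ h

theorem gaussZL_P1 (c : ℤ) (n m : ℤ) (hn : 0 ≤ n) :
    gaussZL (Qh c) (n + 1) m =
      gaussZL (Qh c) n m + Qh (c * (n + 1 - m)) * gaussZL (Qh c) n (m - 1) := by
  lift n to ℕ using hn
  induction n generalizing m with
  | zero =>
    rw [gaussZL_P2 _ _ _ (by simp)]
    simp only [Nat.cast_zero, gaussZL_zero_left]
    by_cases h : m = 0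
    · subst h; simp [Qh_zero]
    · by_cases h1 : m = 1
      · subst h1; simp [Qh_zero]
      · simp [h, show m - 1 ≠ 0 by omega]
  | succ n ih =>
    rw [gaussZL_P2 _ _ m (by positivity)]
    push_cast
    have a1 := gaussZL_P2 c (n : ℤ) m (by positivity)
    have a2 := gaussZL_P2 c (n : ℤ) (m - 1) (by positivity)
    have b1 := ih m
    have b2 := ih (m - 1)
    have q1 : Qh (c * (↑n + 1 + 1 - m)) * Qh (c * (m - 1)) = Qh (c * m) * Qh (c * (↑n + 1 - m)) := by
      rw [← Qh_add, ← Qh_add]; congr 1; ring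
    have q2 : Qh (c * (↑n + 1 - (m - 1))) = Qh (c * (↑n + 1 + 1 - m)) := by congr 1; ring
    rw [q2] at b2
    linear_combination Qh (c * m) * b1 + b2 - a1 - Qh (c * (↑n + 1 + 1 - m)) * a2 -
      gaussZL (Qh c) n (m - 1) * q1

theorem gaussZL_self (v : LL) (n : ℤ) (h : 0 ≤ n) : gaussZL v n n = 1 := by
  lift n to ℕ using h
  rw [gaussZL_nat]
  induction n with
  | zero => simp [gaussRecL]
  | succ n ih => rw [gaussRecL, ih, gaussRecL_lt _ _ _ (by omega)]; simp

theorem gaussZL_symm (c : ℤ) (n m : ℤ) (hn : 0 ≤ n) :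
    gaussZL (Qh c) n m = gaussZL (Qh c) n (n - m) := by
  lift n to ℕ using hn
  induction n generalizing m with
  | zero => simp [gaussZL_zero_left]
  | succ n ih =>
    push_cast
    rw [gaussZL_P2 _ _ m (by positivity), gaussZL_P1 _ _ _ (by positivity), ih m, ih (m - 1)]
    rw [show ((n : ℤ) + 1 - m - 1) = n - m by ring, show ((n : ℤ) - (m - 1)) = n + 1 - m by ring,
      show (n : ℤ) + 1 - (n + 1 - m) = m by ring]
    ring

theorem neg_one_natAbs_succ (e : ℤ) : (-1 : LL) ^ (e + 1).natAbs = - (-1 : LL) ^ e.natAbs := by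
  rcases Int.even_or_odd e with h | h
  · have h1 : Even e.natAbs := Int.natAbs_even.2 h
    have h2 : Odd (e + 1).natAbs := Int.natAbs_odd.2 h.add_one
    rw [h1.neg_one_pow, h2.neg_one_pow]
  · have h1 : Odd e.natAbs := Int.natAbs_odd.2 h
    have h2 : Even (e + 1).natAbs := Int.natAbs_even.2 h.add_one
    rw [h1.neg_one_pow, h2.neg_one_pow]; simp

theorem qb_nonneg (n m : ℤ) (h : 0 ≤ n) : qbinPlusL n m = qbinL n m := by
  unfold qbinPlusL; rw [if_pos h]

theorem qb_neg (n m : ℤ) (h : n < 0) : qbinPlusL n m =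
    (-1) ^ (n - m).natAbs * Qh (-((n - m) ^ 2 + (n - m))) *
    gaussZL (Qh (-2)) (-m - 1) (-n - 1) := by
  unfold qbinPlusL; rw [if_neg (by omega)]

theorem qb_ne (n m : ℤ) (h : qbinPlusL n m ≠ 0) : m ≤ n ∧ (0 ≤ m ∨ n < 0) := by
  by_contra hc
  apply h
  by_cases hn : 0 ≤ n
  · rw [qb_nonneg _ _ hn]
    unfold qbinL gaussZL
    rw [if_neg]; omega
  · rw [qb_neg _ _ (by omega)]
    unfold gaussZL
    rw [if_neg, mul_zero]; omega

theorem qb_lt (n m : ℤ) (h : n < m) : qbinPlusL n m = 0 := by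
  by_contra hc; have := qb_ne _ _ hc; omega

theorem qb_negm (n m : ℤ) (h : 0 ≤ n) (hm : m < 0) : qbinPlusL n m = 0 := by
  by_contra hc; have := qb_ne _ _ hc; omega

theorem qb_self (n : ℤ) : qbinPlusL n n = 1 := by
  by_cases hn : 0 ≤ n
  · rw [qb_nonneg _ _ hn]; exact gaussZL_self _ _ hn
  · rw [qb_neg _ _ (by omega), gaussZL_self _ _ (by omega)]; simp [Qh_zero]

theorem qb_zero_left (m : ℤ) : qbinPlusL 0 m = if m = 0 then 1 else 0 := by
  rw [qb_nonneg _ _ le_rfl]; exact gaussZL_zero_left _ _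

theorem qb_zero_right (n : ℤ) (h : 0 ≤ n) : qbinPlusL n 0 = 1 := by
  rw [qb_nonneg _ _ h]; exact gaussZL_zero_right _ _ h

theorem gaussZL_P2' (c : ℤ) (a b : ℤ) (hb : 0 ≤ b) :
    gaussZL (Qh c) (a + 1) (b + 1) =
      Qh (c * (b + 1)) * gaussZL (Qh c) a (b + 1) + gaussZL (Qh c) a b := by
  by_cases ha : 0 ≤ a
  · rw [gaussZL_P2 _ _ _ ha, add_sub_cancel_right]
  · rw [gaussZL_lt _ _ _ (by omega), gaussZL_lt _ _ _ (by omega), gaussZL_lt _ _ _ (by omega)]; simp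

theorem gaussZL_P1' (c : ℤ) (a b : ℤ) (hb : 0 ≤ b) :
    gaussZL (Qh c) (a + 1) (b + 1) =
      gaussZL (Qh c) a (b + 1) + Qh (c * (a - b)) * gaussZL (Qh c) a b := by
  by_cases ha : 0 ≤ a
  · rw [gaussZL_P1 _ _ _ ha, add_sub_cancel_right]
    rw [show a + 1 - (b + 1) = a - b by ring]
  · rw [gaussZL_lt _ _ _ (by omega), gaussZL_lt _ _ _ (by omega), gaussZL_lt _ _ _ (by omega)]; simp

theorem qb_neg_one (m : ℤ) : qbinPlusL (-1) m =
    if m < 0 then (-1) ^ (-1 - m).natAbs * Qh (- (m ^ 2 + m)) else 0 := by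
  rw [qb_neg _ _ (by omega)]
  split_ifs with h
  · rw [show (- (-1) - 1 : ℤ) = 0 by ring, gaussZL_zero_right _ _ (by omega), mul_one]
    congr 2; ring
  · rw [gaussZL_lt _ _ _ (by omega), mul_zero]

/-- Pascal recurrence, second form. -/
theorem qb_P2 (n m : ℤ) :
    qbinPlusL n m = Qh (2 * m) * qbinPlusL (n - 1) m + qbinPlusL (n - 1) (m - 1) := by
  rcases lt_trichotomy n 0 with h | h | h
  · rw [qb_neg _ _ h, qb_neg _ _ (by omega), qb_neg _ _ (by omega)]
    have := gaussZL_P2' (-2) (-m - 1) (-n - 1) (by omega)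
    rw [show -(n - 1) - 1 = (-n - 1) + 1 by ring, show -(m - 1) - 1 = (-m - 1) + 1 by ring, this,
      show n - 1 - (m - 1) = n - m by ring]
    have e := neg_one_natAbs_succ (n - 1 - m)
    rw [show n - 1 - m + 1 = n - m by ring] at e
    rw [e]
    have q : Qh (2 * m) * Qh (-((n - 1 - m) ^ 2 + (n - 1 - m))) =
        Qh (-((n - m) ^ 2 + (n - m))) * Qh (-2 * (-n - 1 + 1)) := by
      rw [← Qh_add, ← Qh_add]; congr 1; ring
    linear_combination (-(-1) ^ (n - 1 - m).natAbs * gaussZL (Qh (-2)) (-m - 1) (-n - 1 + 1)) * q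
  · subst h
    rw [qb_zero_left, show (0 - 1 : ℤ) = -1 by ring, qb_neg_one, qb_neg_one]
    rcases lt_trichotomy m 0 with h | h | h
    · rw [if_neg (by omega), if_pos h, if_pos (by omega),
        show (-1 - (m - 1) : ℤ) = (-1 - m) + 1 by ring, neg_one_natAbs_succ]
      have q : Qh (2 * m) * Qh (-(m ^ 2 + m)) = Qh (-((m - 1) ^ 2 + (m - 1))) := by
        rw [← Qh_add]; congr 1; ring
      linear_combination (-(-1) ^ (-1 - m).natAbs) * q
    · subst h; simp [Qh_zero]
    · rw [if_neg (by omega), if_neg (by omega), if_neg (by omega)]; simp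
  · rw [qb_nonneg _ _ (by omega), qb_nonneg _ _ (by omega), qb_nonneg _ _ (by omega)]
    have := gaussZL_P2 2 (n - 1) m (by omega)
    rwa [sub_add_cancel] at this

/-- Pascal recurrence, first form. -/
theorem qb_P1 (n m : ℤ) :
    qbinPlusL n m = qbinPlusL (n - 1) m + Qh (2 * (n - m)) * qbinPlusL (n - 1) (m - 1) := by
  rcases lt_trichotomy n 0 with h | h | h
  · rw [qb_neg _ _ h, qb_neg _ _ (by omega), qb_neg _ _ (by omega)]
    have := gaussZL_P1' (-2) (-m - 1) (-n - 1) (by omega)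
    rw [show -(n - 1) - 1 = (-n - 1) + 1 by ring, show -(m - 1) - 1 = (-m - 1) + 1 by ring, this,
      show n - 1 - (m - 1) = n - m by ring]
    have e := neg_one_natAbs_succ (n - 1 - m)
    rw [show n - 1 - m + 1 = n - m by ring] at e
    rw [e]
    have q : Qh (2 * (n - m)) * Qh (-((n - m) ^ 2 + (n - m))) =
        Qh (-((n - 1 - m) ^ 2 + (n - 1 - m))) := by
      rw [← Qh_add]; congr 1; ring
    have q2 : Qh (2 * (n - m)) * Qh (-2 * (-m - 1 - (-n - 1))) = 1 := by
      rw [← Qh_add, ← Qh_zero]; congr 1; ring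
    linear_combination ((-1) ^ (n - 1 - m).natAbs * gaussZL (Qh (-2)) (-m - 1) (-n - 1 + 1)) * q +
     ((-1) ^ (n - 1 - m).natAbs * gaussZL (Qh (-2)) (-m - 1) (-n - 1) *
       Qh (-((n - m) ^ 2 + (n - m)))) * q2
  · subst h
    rw [qb_zero_left, show (0 - 1 : ℤ) = -1 by ring, qb_neg_one, qb_neg_one]
    rcases lt_trichotomy m 0 with h | h | h
    · rw [if_neg (by omega), if_pos h, if_pos (by omega),
        show (-1 - (m - 1) : ℤ) = (-1 - m) + 1 by ring, neg_one_natAbs_succ]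
      have q : Qh (2 * (0 - m)) * Qh (-((m - 1) ^ 2 + (m - 1))) = Qh (-(m ^ 2 + m)) := by
        rw [← Qh_add]; congr 1; ring
      linear_combination ((-1) ^ (-1 - m).natAbs) * q
    · subst h; simp [Qh_zero]
    · rw [if_neg (by omega), if_neg (by omega), if_neg (by omega)]; simp
  · rw [qb_nonneg _ _ (by omega), qb_nonneg _ _ (by omega), qb_nonneg _ _ (by omega)]
    have := gaussZL_P1 2 (n - 1) m (by omega)
    rwa [sub_add_cancel] at this

theorem qb_symm (n m : ℤ) (hn : 0 ≤ n) : qbinPlusL n m = qbinPlusL n (n - m) := by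
  rw [qb_nonneg _ _ hn, qb_nonneg _ _ hn]; exact gaussZL_symm _ _ _ hn

/-- `(1 - q^(n-m)) [n,m] = (1 - q^n) [n-1,m]`. -/
theorem qb_M1 (n m : ℤ) :
    (1 - Qh (2 * (n - m))) * qbinPlusL n m = (1 - Qh (2 * n)) * qbinPlusL (n - 1) m := by
  have a := qb_P1 n m
  have b := qb_P2 n m
  have q : Qh (2 * (n - m)) * Qh (2 * m) = Qh (2 * n) := by
    rw [← Qh_add]; congr 1; ring
  linear_combination a - Qh (2 * (n - m)) * b - qbinPlusL (n - 1) m * q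

/-- `(1 - q^m) [n,m] = (1 - q^(n-m+1)) [n,m-1]`. -/
theorem qb_M2 (n m : ℤ) :
    (1 - Qh (2 * m)) * qbinPlusL n m = (1 - Qh (2 * (n - m + 1))) * qbinPlusL n (m - 1) := by
  have a := qb_P1 (n + 1) m
  have b := qb_P2 (n + 1) m
  rw [add_sub_cancel_right] at a b
  have q : Qh (2 * (n + 1 - m)) = Qh (2 * (n - m + 1)) := by congr 1; ring
  rw [q] at a
  linear_combination b - a

theorem trinomial (Y j i : ℤ) :
    qbinPlusL Y j * qbinPlusL j i = qbinPlusL Y i * qbinPlusL (Y - i) (j - i) := by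
  by_cases h1 : i ≤ j
  swap
  · rw [qb_lt j i (by omega), mul_zero]
    by_contra hc
    have hc := Ne.symm hc
    have a := qb_ne _ _ (left_ne_zero_of_mul hc)
    have b := qb_ne _ _ (right_ne_zero_of_mul hc)
    omega
  obtain ⟨v, rfl⟩ : ∃ v : ℕ, i = j - v := ⟨(j - i).toNat, by omega⟩
  clear h1
  induction v with
  | zero => 
    simp only [Nat.cast_zero, sub_zero, sub_self, qb_self, mul_one]
    by_cases hY : j ≤ Y
    · rw [qb_zero_right _ (by omega), mul_one]
    · rw [qb_lt Y j (by omega)]; simp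
  | succ v ih =>
    have hne : (1 : LL) - Qh (2 * (v + 1)) ≠ 0 := Qh_one_sub_ne _ (by omega)
    apply mul_left_cancel₀ hne
    set i : ℤ := j - ((v + 1 : ℕ) : ℤ) with hi
    have hi' : j - (v : ℤ) = i + 1 := by rw [hi]; push_cast; ring
    have hv : (v : ℤ) + 1 = j - i := by rw [hi]; push_cast; ring
    rw [hi'] at ih
    rw [hv]
    have a1 := qb_M2 j (i + 1)
    have a2 := qb_M2 Y (i + 1)
    have a3 := qb_M2 (Y - i) (j - i)
    have a4 := qb_M1 (Y - i) (j - i - 1)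
    rw [add_sub_cancel_right, show j - (i + 1) + 1 = j - i by ring] at a1
    rw [add_sub_cancel_right, show Y - (i + 1) + 1 = Y - i by ring] at a2
    rw [show Y - i - (j - i) + 1 = Y - j + 1 by ring] at a3
    rw [show Y - i - (j - i - 1) = Y - j + 1 by ring] at a4
    rw [show Y - (i + 1) = Y - i - 1 by ring, show j - (i + 1) = j - i - 1 by ring] at ih
    linear_combination - qbinPlusL Y j * a1 + (1 - Qh (2 * (i + 1))) * ih +
      qbinPlusL (Y - i - 1) (j - i - 1) * a2 - qbinPlusL Y i * a3 - qbinPlusL Y i * a4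

theorem uniq_zero (D : ℤ → ℤ → LL) (c : ℤ) (h0 : ∀ X i, X - i < c → D X i = 0)
    (hrec : ∀ X i, D (X - 1) i = 0 → (D X i = 0 ↔ D (X - 1) (i - 1) = 0))
    (X0 : ℤ) (hb : ∀ i, D X0 i = 0) : ∀ X i, D X i = 0 := by
  have key : ∀ n : ℕ, ∀ X i, X - i < c + n → D X i = 0 := by
    intro n
    induction n with
    | zero => intro X i h; exact h0 X i (by simpa using h)
    | succ n ih =>
      have hd : ∀ X, D X (X - (c + n)) = 0 := by
        intro X
        have hstep : ∀ X, (D X (X - (c + n)) = 0 ↔ D (X - 1) (X - 1 - (c + n)) = 0) := by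
          intro X
          have := hrec X (X - (c + n)) (ih _ _ (by omega))
          rw [show X - 1 - (c + n) = X - (c + n) - 1 by ring]
          exact this
        refine Int.inductionOn' (motive := fun X => D X (X - (c + n)) = 0) X X0 (hb _) ?_ ?_
        · intro k hk ih2
          rw [hstep, add_sub_cancel_right]; exact ih2
        · intro k hk ih2
          rwa [hstep] at ih2
      intro X i h
      by_cases h' : X - i < c + n
      · exact ih _ _ h'
      · have : i = X - (c + n) := by push_cast at h; omega
        rw [this]; exact hd X
  intro X i
  exact key (X - i - c + 1).toNat X i (by omega)

theorem finite_of_bdd {f : ℤ → LL} (a b : ℤ) (h : ∀ k, f k ≠ 0 → a ≤ k ∧ k ≤ b) :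
    (Function.support f).Finite :=
  (Set.finite_Icc a b).subset fun k hk => h k hk

theorem finsum_shift (f : ℤ → LL) : ∑ᶠ k, f (k + 1) = ∑ᶠ k, f k :=
  finsum_comp_equiv (Equiv.addRight (1 : ℤ))

theorem finsum_shift' (f : ℤ → LL) (c : ℤ) : ∑ᶠ k, f (k + c) = ∑ᶠ k, f k :=
  finsum_comp_equiv (Equiv.addRight c)

theorem finite_shift {f : ℤ → LL} (hf : (Function.support f).Finite) :
    (Function.support (fun k => f (k + 1))).Finite :=
  hf.preimage (f := fun k : ℤ => k + 1) (fun a _ b _ h => by simpa using h)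

/-- the summand of the linking identity -/
def lk (X Y i j k : ℤ) : LL :=
  Qh (2 * ((i - k) * (j - k))) * qbinPlusL (X - j) (i - k) * qbinPlusL (Y - i) (j - k) *
    qbinPlusL (X + Y - i - j + k) k

theorem lk_ne {X Y i j k : ℤ} (h : lk X Y i j k ≠ 0) :
    i + j - X ≤ k ∧ k ≤ max i j ∧ i + j ≤ X + Y := by
  unfold lk at h
  have a := qb_ne _ _ (right_ne_zero_of_mul h)
  have h := left_ne_zero_of_mul h
  have b := qb_ne _ _ (right_ne_zero_of_mul h)
  have h := left_ne_zero_of_mul h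
  have c := qb_ne _ _ (right_ne_zero_of_mul h)
  omega

theorem lk_fin (X Y i j : ℤ) : (Function.support (lk X Y i j)).Finite :=
  finite_of_bdd (i + j - X) (max i j) fun _ hk => ⟨(lk_ne hk).1, (lk_ne hk).2.1⟩

def lkU (X Y i j k : ℤ) : LL :=
  Qh (2 * ((i - k) * (j - k) + (X + Y - i - j))) * qbinPlusL (X - 1 - j) (i - k) *
    qbinPlusL (Y - i) (j - k) * qbinPlusL (X + Y - i - j + k - 1) (k - 1)

theorem lkU_fin (X Y i j : ℤ) : (Function.support (lkU X Y i j)).Finite := by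
  refine finite_of_bdd (i + j - X) (max i j) fun k h => ?_
  unfold lkU at h
  have a := qb_ne _ _ (right_ne_zero_of_mul h)
  have h := left_ne_zero_of_mul h
  have b := qb_ne _ _ (right_ne_zero_of_mul h)
  have h := left_ne_zero_of_mul h
  have c := qb_ne _ _ (right_ne_zero_of_mul h)
  omega

theorem lk_step (X Y i j k : ℤ) : lk X Y i j k =
    (lk (X - 1) Y i j k + Qh (2 * (X - i)) * lk (X - 1) Y (i - 1) j k) +
      (lkU X Y i j k - lkU X Y i j (k + 1)) := by
  unfold lk lkU
  have a := qb_P1 (X - j) (i - k)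
  have b := qb_P1 (X + Y - i - j + k) k
  have c := qb_P1 (Y - i + 1) (j - k)
  rw [add_sub_cancel_right] at c
  rw [show X - j - 1 = X - 1 - j by ring, show i - k - 1 = i - 1 - k by ring] at a
  rw [show X - 1 + Y - i - j + k = X + Y - i - j + k - 1 by ring,
    show X - 1 + Y - (i - 1) - j + k = X + Y - i - j + k by ring,
    show Y - (i - 1) = Y - i + 1 by ring, show i - (k + 1) = i - 1 - k by ring,
    show j - (k + 1) = j - k - 1 by ring, show k + 1 - 1 = k by ring,
    show X + Y - i - j + (k + 1) - 1 = X + Y - i - j + k by ring]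
  have q1 : Qh (2 * ((i - k) * (j - k))) * Qh (2 * (X - j - (i - k))) =
      Qh (2 * (X - i)) * Qh (2 * ((i - 1 - k) * (j - k))) := by
    rw [← Qh_add, ← Qh_add]; congr 1; ring
  have q2 : Qh (2 * ((i - k) * (j - k))) * Qh (2 * (X + Y - i - j + k - k)) =
      Qh (2 * ((i - k) * (j - k) + (X + Y - i - j))) := by
    rw [← Qh_add]; congr 1; ring
  have q3 : Qh (2 * (X - i)) * Qh (2 * ((i - 1 - k) * (j - k))) * Qh (2 * (Y - i + 1 - (j - k))) =
      Qh (2 * ((i - 1 - k) * (j - k - 1) + (X + Y - i - j))) := by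
    rw [← Qh_add, ← Qh_add]; congr 1; ring
  rw [c, a]
  generalize qbinPlusL (X - 1 - j) (i - k) = A at *
  generalize qbinPlusL (X - 1 - j) (i - 1 - k) = A' at *
  generalize qbinPlusL (Y - i) (j - k) = B at *
  generalize qbinPlusL (Y - i) (j - k - 1) = B' at *
  generalize qbinPlusL (X + Y - i - j + k) k = C at *
  generalize qbinPlusL (X + Y - i - j + k - 1) k = C' at *
  generalize qbinPlusL (X + Y - i - j + k - 1) (k - 1) = C'' at *
  linear_combination Qh (2 * ((i - k) * (j - k))) * A * B * b + A * B * C'' * q2 +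
    A' * B * C * q1 - A' * B' * C * q3

theorem lk_rec (X Y i j : ℤ) : ∑ᶠ k, lk X Y i j k =
    ∑ᶠ k, lk (X - 1) Y i j k + Qh (2 * (X - i)) * ∑ᶠ k, lk (X - 1) Y (i - 1) j k := by
  rw [finsum_congr (lk_step X Y i j), finsum_add_distrib, finsum_add_distrib,
    finsum_sub_distrib (lkU_fin _ _ _ _) (finite_shift (lkU_fin _ _ _ _)), finsum_shift, sub_self,
    add_zero, mul_finsum]
  · exact lk_fin _ _ _ _
  · exact (lk_fin _ _ _ _).subset (Function.support_mul_subset_right _ _)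
  · exact ((lk_fin _ _ _ _).union ((lk_fin _ _ _ _).subset
      (Function.support_mul_subset_right _ _))).subset (Function.support_add _ _)
  · exact ((lkU_fin _ _ _ _).union (finite_shift (lkU_fin _ _ _ _))).subset
      (Function.support_sub _ _)

/-- The linking identity. -/
theorem linking (X Y i j : ℤ) :
    ∑ᶠ k, lk X Y i j k = qbinPlusL X i * qbinPlusL Y j := by
  have := uniq_zero (fun X i => ∑ᶠ k, lk X Y i j k - qbinPlusL X i * qbinPlusL Y j) (j - Y)
    ?_ ?_ j ?_ X i
  · exact sub_eq_zero.1 this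
  · intro X i h
    have h1 : ∀ k, lk X Y i j k = 0 := by
      intro k; by_contra hc; have := lk_ne hc; omega
    have h2 : qbinPlusL X i * qbinPlusL Y j = 0 := by
      by_contra hc
      have a := qb_ne _ _ (left_ne_zero_of_mul hc)
      have b := qb_ne _ _ (right_ne_zero_of_mul hc)
      omega
    simp [finsum_congr h1, h2]
  · intro X i h
    have e : ∑ᶠ k, lk X Y i j k - qbinPlusL X i * qbinPlusL Y j =
       (∑ᶠ k, lk (X - 1) Y i j k - qbinPlusL (X - 1) i * qbinPlusL Y j) +
       Qh (2 * (X - i)) *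
        (∑ᶠ k, lk (X - 1) Y (i - 1) j k - qbinPlusL (X - 1) (i - 1) * qbinPlusL Y j) := by
      rw [lk_rec, qb_P1 X i]; ring
    rw [e, h, zero_add]
    exact ⟨Qh_mul_eq_zero, fun h => by rw [h, mul_zero]⟩
  · intro i
    rw [finsum_eq_single _ i]
    · unfold lk
      rw [mul_comm (qbinPlusL j i), trinomial, sub_self, sub_self, zero_mul, mul_zero, Qh_zero,
        qb_zero_right 0 le_rfl, show j + Y - i - j + i = Y by ring]
      ring
    · intro k hk
      unfold lk
      rw [sub_self, qb_zero_left, if_neg (by omega)]; simp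

def vd (X Y r k : ℤ) : LL := Qh (2 * (k * (X - r + k))) * qbinPlusL X (r - k) * qbinPlusL Y k

theorem vd_ne {X Y r k : ℤ} (h : vd X Y r k ≠ 0) : r - X ≤ k ∧ k ≤ Y := by
  unfold vd at h
  have b := qb_ne _ _ (right_ne_zero_of_mul h)
  have h := left_ne_zero_of_mul h
  have c := qb_ne _ _ (right_ne_zero_of_mul h)
  omega

theorem vd_fin (X Y r : ℤ) : (Function.support (vd X Y r)).Finite :=
  finite_of_bdd (r - X) Y fun _ hk => vd_ne hk

theorem vd_rec (X Y r : ℤ) : ∑ᶠ k, vd X Y r k =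
    Qh (2 * r) * ∑ᶠ k, vd (X - 1) Y r k + ∑ᶠ k, vd (X - 1) Y (r - 1) k := by
  rw [mul_finsum, ← finsum_add_distrib _ (vd_fin _ _ _)]
  · refine finsum_congr fun k => ?_
    unfold vd
    have a := qb_P2 X (r - k)
    rw [a, show r - 1 - k = r - k - 1 by ring, show X - 1 - (r - 1) + k = X - r + k by ring]
    have q : Qh (2 * (k * (X - r + k))) * Qh (2 * (r - k)) =
      Qh (2 * r) * Qh (2 * (k * (X - 1 - r + k))) := by
      rw [← Qh_add, ← Qh_add]; congr 1; ring
    linear_combination qbinPlusL (X - 1) (r - k) * qbinPlusL Y k * q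
  · exact (vd_fin _ _ _).subset (Function.support_mul_subset_right _ _)

theorem vandermonde (X Y r : ℤ) : ∑ᶠ k, vd X Y r k = qbinPlusL (X + Y) r := by
  have := uniq_zero (fun X r => ∑ᶠ k, vd X Y r k - qbinPlusL (X + Y) r) (-Y)
    ?_ ?_ 0 ?_ X r
  · exact sub_eq_zero.1 this
  · intro X i h
    have h1 : ∀ k, vd X Y i k = 0 := by
      intro k; by_contra hc; have := vd_ne hc; omega
    simp [finsum_congr h1, qb_lt (X + Y) i (by omega)]
  · intro X r h
    have e : ∑ᶠ k, vd X Y r k - qbinPlusL (X + Y) r =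
       Qh (2 * r) * (∑ᶠ k, vd (X - 1) Y r k - qbinPlusL (X - 1 + Y) r) +
        (∑ᶠ k, vd (X - 1) Y (r - 1) k - qbinPlusL (X - 1 + Y) (r - 1)) := by
      rw [vd_rec, qb_P2 (X + Y) r, show X + Y - 1 = X - 1 + Y by ring]; ring
    rw [e, h, mul_zero, zero_add]
  · intro r
    rw [finsum_eq_single _ r]
    · unfold vd
      simp [qb_zero_left, Qh_zero]
    · intro k hk
      unfold vd
      rw [qb_zero_left, if_neg (by omega)]; simp

/-- the base sum -/
def wd (X Y a n : ℤ) : LL := Qh (2 * (n * (n + a))) * qbinPlusL X (n + a) * qbinPlusL Y n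

theorem wd_sum_aux (X Y a : ℤ) (hX : 0 ≤ X) :
    ∑ᶠ n, wd X Y a n = qbinPlusL (X + Y) (X - a) := by
  rw [← vandermonde]
  refine finsum_congr fun k => ?_
  unfold wd vd
  rw [qb_symm X _ hX, show X - (k + a) = X - a - k by ring]
  congr 4; ring

theorem wd_sum (X Y a : ℤ) (h : 0 ≤ X + Y) :
    ∑ᶠ n, wd X Y a n = qbinPlusL (X + Y) (Y + a) := by
  by_cases hX : 0 ≤ X
  · rw [wd_sum_aux _ _ _ hX, qb_symm _ _ h]; congr 1; ring
  · have := wd_sum_aux Y X (-a) (by omega)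
    rw [add_comm Y X, sub_neg_eq_add] at this
    rw [← this, ← finsum_shift' (wd Y X (-a)) a]
    refine finsum_congr fun k => ?_
    unfold wd
    rw [show k + a + -a = k by ring, mul_comm k]
    ring

/-! ### supernomials -/

def sn {k : ℕ} (n : Fin k → ℤ) (m : ℤ) : Fin (k + 1) → ℤ := Fin.snoc (α := fun _ => ℤ) n m

def ini {k : ℕ} (L : Fin (k + 1) → ℤ) : Fin k → ℤ := fun i => L i.castSucc

theorem sn_castSucc {k : ℕ} (n : Fin k → ℤ) (m : ℤ) (i : Fin k) : sn n m i.castSucc = n i := by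
  simp [sn]

theorem sn_last {k : ℕ} (n : Fin k → ℤ) (m : ℤ) : sn n m (Fin.last k) = m := by
  simp [sn]

theorem ini_sn {k : ℕ} (n : Fin k → ℤ) (m : ℤ) : ini (sn n m) = n := by
  funext i; simp [ini, sn_castSucc]

theorem sn_ini {k : ℕ} (L : Fin (k + 1) → ℤ) : sn (ini L) (L (Fin.last k)) = L := by
  funext i
  refine Fin.lastCases ?_ (fun i => ?_) i
  · rw [sn_last]
  · rw [sn_castSucc]; rfl

def snEquiv (k : ℕ) : ℤ × (Fin k → ℤ) ≃ (Fin (k + 1) → ℤ) where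
  toFun x := sn x.2 x.1
  invFun L := (L (Fin.last k), ini L)
  left_inv x := by ext <;> simp [sn_last, ini_sn]
  right_inv L := sn_ini L

def bump {k : ℕ} (L : Fin k → ℤ) (m : ℤ) : Fin k → ℤ := fun i =>
  L i + if (i : ℕ) + 1 = k then m else 0

theorem bump_bump {k : ℕ} (L : Fin k → ℤ) (m m' : ℤ) : bump (bump L m) m' = bump L (m + m') := by
  funext i; unfold bump; split_ifs <;> ring

theorem bump_zero {k : ℕ} (L : Fin k → ℤ) : bump L 0 = L := by
  funext i; simp [bump]

theorem bump_nonneg {k : ℕ} {L : Fin k → ℤ} (hL : ∀ i, 0 ≤ L i) {m : ℤ} (hm : 0 ≤ m) :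
    ∀ i, 0 ≤ bump L m i := by
  intro i; unfold bump; have := hL i; split_ifs <;> omega

theorem bump_last {k : ℕ} (L : Fin (k + 1) → ℤ) (m : ℤ) :
    bump L m (Fin.last k) = L (Fin.last k) + m := by
  simp [bump]

theorem ini_bump {k : ℕ} (L : Fin (k + 1) → ℤ) (m : ℤ) : ini (bump L m) = ini L := by
  funext i
  have := i.isLt
  simp only [ini, bump, Fin.val_castSucc]
  rw [if_neg (by omega), add_zero]

def wt {k : ℕ} (L : Fin k → ℤ) : ℤ := ∑ i : Fin k, (((i : ℕ) : ℤ) + 1) * L i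

theorem wt_succ {k : ℕ} (L : Fin (k + 1) → ℤ) :
    wt L = wt (ini L) + (k + 1) * L (Fin.last k) := by
  unfold wt; rw [Fin.sum_univ_castSucc]; simp [ini]

theorem wt_bump {k : ℕ} (L : Fin k → ℤ) (m : ℤ) : wt (bump L m) = wt L + k * m := by
  cases k with
  | zero => simp [wt]
  | succ k => rw [wt_succ, wt_succ, ini_bump, bump_last]; push_cast; ring

def Sr : (k : ℕ) → (Fin k → ℤ) → ℤ → LL
  | 0, _, r => if r = 0 then 1 else 0
  | k + 1, L, r => ∑ᶠ m : ℤ, qbinL (L (Fin.last k)) m *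
      (Qh (2 * ((L (Fin.last k) - m) * (r - m))) * Sr k (bump (ini L) m) (r - m))

theorem qbinL_ne {n m : ℤ} (h : qbinL n m ≠ 0) : 0 ≤ m ∧ m ≤ n := by
  by_contra hc
  apply h
  unfold qbinL gaussZL
  rw [if_neg hc]

theorem qbinL_fin (n : ℤ) (h : ℤ → LL) :
    (Function.support (fun m => qbinL n m * h m)).Finite :=
  finite_of_bdd 0 n fun _ hm => qbinL_ne (left_ne_zero_of_mul hm)

theorem qbinL_congr (n : ℤ) (f g : ℤ → LL) (hfg : ∀ m, 0 ≤ m → m ≤ n → f m = g m) :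
    ∑ᶠ m, qbinL n m * f m = ∑ᶠ m, qbinL n m * g m := by
  refine finsum_congr fun m => ?_
  by_cases h : qbinL n m = 0
  · simp [h]
  · have := qbinL_ne h
    rw [hfg m this.1 this.2]

theorem sh1 (n : ℤ) (hn : 0 ≤ n) (h : ℤ → LL) : ∑ᶠ m, qbinL (n + 1) m * h m =
    ∑ᶠ m, qbinL n m * (h m + Qh (2 * (n - m)) * h (m + 1)) := by
  have e1 : ∀ m, qbinL (n + 1) m * h m = qbinL n m * h m +
      qbinL n (m - 1) * (Qh (2 * (n + 1 - m)) * h m) := by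
    intro m
    have := gaussZL_P1 2 n m hn
    unfold qbinL
    rw [this]; ring
  have e2 : ∀ m, qbinL n m * (h m + Qh (2 * (n - m)) * h (m + 1)) = qbinL n m * h m +
      qbinL n m * (Qh (2 * (n - m)) * h (m + 1)) := fun m => by ring
  rw [finsum_congr e1, finsum_congr e2, finsum_add_distrib (qbinL_fin _ _),
    finsum_add_distrib (qbinL_fin _ _) (qbinL_fin _ _)]
  · congr 1
    rw [← finsum_shift]
    refine finsum_congr fun m => ?_
    rw [add_sub_cancel_right, show n + 1 - (m + 1) = n - m by ring]
  · exact finite_of_bdd 1 (n + 1) fun m hm => by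
      have := qbinL_ne (left_ne_zero_of_mul hm); omega

theorem sh2 (n : ℤ) (hn : 0 ≤ n) (h : ℤ → LL) : ∑ᶠ m, qbinL (n + 1) m * h m =
    ∑ᶠ m, qbinL n m * (Qh (2 * m) * h m + h (m + 1)) := by
  have e1 : ∀ m, qbinL (n + 1) m * h m = qbinL n m * (Qh (2 * m) * h m) +
      qbinL n (m - 1) * h m := by
    intro m
    have := gaussZL_P2 2 n m hn
    unfold qbinL
    rw [this]; ring
  have e2 : ∀ m, qbinL n m * (Qh (2 * m) * h m + h (m + 1)) = qbinL n m * (Qh (2 * m) * h m) +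
      qbinL n m * h (m + 1) := fun m => by ring
  rw [finsum_congr e1, finsum_congr e2, finsum_add_distrib (qbinL_fin _ _),
    finsum_add_distrib (qbinL_fin _ _) (qbinL_fin _ _)]
  · congr 1
    rw [← finsum_shift]
    refine finsum_congr fun m => ?_
    rw [add_sub_cancel_right]
  · exact finite_of_bdd 1 (n + 1) fun m hm => by
      have := qbinL_ne (left_ne_zero_of_mul hm); omega

theorem qsum_add (n : ℤ) (f g : ℤ → LL) : ∑ᶠ m, qbinL n m * (f m + g m) =
    ∑ᶠ m, qbinL n m * f m + ∑ᶠ m, qbinL n m * g m := by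
  rw [← finsum_add_distrib (qbinL_fin _ _) (qbinL_fin _ _)]
  exact finsum_congr fun m => by ring

theorem qsum_mul (n : ℤ) (c : LL) (f : ℤ → LL) : ∑ᶠ m, qbinL n m * (c * f m) =
    c * ∑ᶠ m, qbinL n m * f m := by
  rw [mul_finsum]
  exact finsum_congr fun m => by ring

/-- first expansion of `S(L+e; r)` -/
theorem Sr_bump1 {k : ℕ} (L : Fin (k + 1) → ℤ) (hL : ∀ i, 0 ≤ L i) (r : ℤ) :
    Sr (k + 1) (bump L 1) r = ∑ᶠ m, qbinL (L (Fin.last k)) m *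
      (Qh (2 * ((L (Fin.last k) - m) * (r - m))) *
        (Qh (2 * (r - m)) * Sr k (bump (ini L) m) (r - m) +
          Sr k (bump (bump (ini L) m) 1) (r - m - 1))) := by
  rw [Sr, ini_bump, bump_last, sh1 _ (hL _)]
  refine finsum_congr fun m => ?_
  congr 1
  rw [bump_bump, show r - (m + 1) = r - m - 1 by ring]
  generalize L (Fin.last k) = Λ
  have q1 : Qh (2 * ((Λ + 1 - m) * (r - m))) = Qh (2 * ((Λ - m) * (r - m))) * Qh (2 * (r - m)) := by
    rw [← Qh_add]; congr 1; ring
  have q2 : Qh (2 * (Λ - m)) * Qh (2 * ((Λ + 1 - (m + 1)) * (r - m - 1))) =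
      Qh (2 * ((Λ - m) * (r - m))) := by
    rw [← Qh_add]; congr 1; ring
  rw [q1, ← q2]; ring

/-- second expansion of `S(L+e; r)` -/
theorem Sr_bump2 {k : ℕ} (L : Fin (k + 1) → ℤ) (hL : ∀ i, 0 ≤ L i) (r : ℤ) :
    Sr (k + 1) (bump L 1) r = Qh (2 * r) * Sr (k + 1) L r + ∑ᶠ m, qbinL (L (Fin.last k)) m *
      (Qh (2 * ((L (Fin.last k) - m) * (r - 1 - m))) *
          Sr k (bump (bump (ini L) m) 1) (r - 1 - m)) := by
  rw [Sr, ini_bump, bump_last, sh2 _ (hL _), Sr, ← qsum_mul, ← qsum_add]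
  refine finsum_congr fun m => ?_
  congr 1
  rw [bump_bump, show r - (m + 1) = r - 1 - m by ring]
  generalize L (Fin.last k) = Λ
  have q1 : Qh (2 * m) * Qh (2 * ((Λ + 1 - m) * (r - m))) =
      Qh (2 * r) * Qh (2 * ((Λ - m) * (r - m))) := by
    rw [← Qh_add, ← Qh_add]; congr 1; ring
  have q2 : Λ + 1 - (m + 1) = Λ - m := by ring
  rw [q2]
  linear_combination Sr k (bump (ini L) m) (r - m) * q1

theorem ini_nonneg {k : ℕ} {L : Fin (k + 1) → ℤ} (hL : ∀ i, 0 ≤ L i) : ∀ i, 0 ≤ ini L i :=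
  fun _ => hL _

/-- the combination of expansion 1 with `Q_k` -/
theorem Sr_bump3 {k : ℕ}
    (Q : ∀ (L : Fin k → ℤ) (_ : ∀ i, 0 ≤ L i) (r : ℤ),
      Qh (2 * r) * Sr k L r + Sr k (bump L 1) (r - 1) =
      Sr k (bump L 1) r + Qh (2 * (wt L + k + 1 - r)) * Sr k L (r - k - 1))
    (L : Fin (k + 1) → ℤ) (hL : ∀ i, 0 ≤ L i) (r : ℤ) :
    Sr (k + 1) (bump L 1) r = ∑ᶠ m, qbinL (L (Fin.last k)) m *
      (Qh (2 * ((L (Fin.last k) - m) * (r - m))) * Sr k (bump (bump (ini L) m) 1) (r - m)) +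
      Qh (2 * (wt L + k + 1 - r)) * Sr (k + 1) L (r - k - 1) := by
  rw [Sr_bump1 L hL, Sr, ← qsum_mul, ← qsum_add]
  refine qbinL_congr _ _ _ fun m hm _ => ?_
  rw [Q _ (bump_nonneg (ini_nonneg hL) hm), wt_bump, wt_succ]
  rw [show r - m - k - 1 = r - k - 1 - m by ring]
  generalize L (Fin.last k) = Λ
  have q1 : Qh (2 * ((Λ - m) * (r - m))) * Qh (2 * (wt (ini L) + k * m + k + 1 - (r - m))) =
      Qh (2 * (wt (ini L) + (k + 1) * Λ + k + 1 - r)) * Qh (2 * ((Λ - m) * (r - k - 1 - m))) := by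
    rw [← Qh_add, ← Qh_add]; congr 1; ring
  linear_combination Sr k (bump (ini L) m) (r - k - 1 - m) * q1

theorem Sr_Q (k : ℕ) : ∀ (L : Fin k → ℤ) (_ : ∀ i, 0 ≤ L i) (r : ℤ),
      Qh (2 * r) * Sr k L r + Sr k (bump L 1) (r - 1) =
      Sr k (bump L 1) r + Qh (2 * (wt L + k + 1 - r)) * Sr k L (r - k - 1) := by
  induction k with
  | zero =>
    intro L _ r
    simp only [Sr, wt]
    by_cases h : r = 0
    · subst h; simp [Qh_zero]
    · by_cases h1 : r = 1
      · subst h1; simp [Qh_zero]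
      · simp [h, show r - 1 ≠ 0 by omega]
  | succ k ih =>
    intro L hL r
    rw [Sr_bump2 L hL r, Sr_bump3 ih L hL (r - 1)]
    rw [show wt L + k + 1 - (r - 1) = wt L + (k + 1 : ℕ) + 1 - r by push_cast; ring,
      show r - 1 - (k : ℤ) - 1 = r - (k + 1 : ℕ) - 1 by push_cast; ring]
    ring

/-- the recurrence for supernomials -/
theorem Sr_rec {k : ℕ} (L : Fin (k + 1) → ℤ) (hL : ∀ i, 0 ≤ L i) (r : ℤ) :
    Sr (k + 1) (bump L 1) r = Sr (k + 1) (sn (bump (ini L) 1) (L (Fin.last k))) r +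
      Qh (2 * (wt L + k + 1 - r)) * Sr (k + 1) L (r - k - 1) := by
  rw [Sr_bump3 (Sr_Q k) L hL r]
  congr 1
  rw [Sr, sn_last, ini_sn]
  refine finsum_congr fun m => ?_
  rw [bump_bump, bump_bump, add_comm m 1]

theorem Sr_zero {k : ℕ} (L : Fin k → ℤ) (r : ℤ) : Sr (k + 1) (sn L 0) r = Sr k L r := by
  rw [Sr, finsum_eq_single _ 0]
  · rw [sn_last, ini_sn, bump_zero]
    simp [Qh_zero, qbinL, gaussZL_zero_left]
  · intro m hm
    rw [sn_last, qbinL, gaussZL_zero_left, if_neg hm, zero_mul]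

theorem Sr_one (L : Fin 1 → ℤ) (r : ℤ) : Sr 1 L r = qbinL (L 0) r := by
  rw [Sr, finsum_eq_single _ r]
  · simp [Sr, Qh_zero]
  · intro m hm
    rw [Sr, if_neg (by omega)]; simp

theorem Sr_ne {k : ℕ} (L : Fin k → ℤ) (r : ℤ) (hL : ∀ i, 0 ≤ L i) (h : Sr k L r ≠ 0) :
    0 ≤ r ∧ r ≤ wt L := by
  induction k generalizing r with
  | zero =>
    simp only [Sr] at h
    have : r = 0 := by by_contra hc; simp [hc] at h
    simp [this, wt]
  | succ k ih =>
    have : ∃ m, qbinL (L (Fin.last k)) m *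
      (Qh (2 * ((L (Fin.last k) - m) * (r - m))) * Sr k (bump (ini L) m) (r - m)) ≠ 0 := by
      by_contra hc
      push Not at hc
      apply h
      rw [Sr, finsum_congr hc, finsum_zero]
    obtain ⟨m, hm⟩ := this
    have h1 := qbinL_ne (left_ne_zero_of_mul hm)
    have h2 := ih _ _ (bump_nonneg (ini_nonneg hL) h1.1)
      (right_ne_zero_of_mul (right_ne_zero_of_mul hm))
    rw [wt_bump] at h2
    rw [wt_succ]
    refine ⟨by omega, ?_⟩
    nlinarith

def supE {k : ℕ} (L n : Fin k → ℤ) : ℤ := ∑ i : Fin k,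
          if hi : (i : ℕ) + 1 < k then
            n i * (-(n ⟨(i : ℕ) + 1, hi⟩) +
              ∑ j ∈ Finset.univ.filter (fun j : Fin k => i < j), L j)
          else 0

def supP {k : ℕ} (L n : Fin k → ℤ) : LL := ∏ i : Fin k,
          qbinL (L i + (if hi : (i : ℕ) + 1 < k then n ⟨(i : ℕ) + 1, hi⟩ else 0)) (n i)

def supT {k : ℕ} (L : Fin k → ℤ) (a : ℤ) (n : Fin k → ℤ) : LL :=
    if (∑ i, n i) = a then Qh (2 * supE L n) * supP L n else 0

theorem qSupL_eq {k : ℕ} (L : Fin k → ℤ) (a : ℤ) : qSupL L a = ∑ᶠ n, supT L a n := rfl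

theorem sn_next {k : ℕ} (n : Fin k → ℤ) (m : ℤ) (i : Fin k) (h : (i : ℕ) + 1 < k + 1) :
    sn n m ⟨(i : ℕ) + 1, h⟩ = if hi : (i : ℕ) + 1 < k then n ⟨(i : ℕ) + 1, hi⟩ else m := by
  split_ifs with hi
  · have := sn_castSucc n m ⟨(i : ℕ) + 1, hi⟩
    rw [← this]; rfl
  · have : (⟨(i : ℕ) + 1, h⟩ : Fin (k + 1)) = Fin.last k := by
      apply Fin.ext; simp; omega
    rw [this, sn_last]

theorem supP_sn {k : ℕ} (L : Fin (k + 1) → ℤ) (n : Fin k → ℤ) (m : ℤ) :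
    supP L (sn n m) = qbinL (L (Fin.last k)) m * supP (bump (ini L) m) n := by
  unfold supP
  rw [Fin.prod_univ_castSucc, mul_comm]
  congr 1
  · simp [sn_last]
  · refine Finset.prod_congr rfl fun i _ => ?_
    have := i.isLt
    rw [sn_castSucc, dif_pos (show ((i.castSucc : Fin (k + 1)) : ℕ) + 1 < k + 1 by simp)]
    simp only [Fin.val_castSucc]
    rw [sn_next]
    congr 1
    unfold bump ini
    by_cases h : (i : ℕ) + 1 < k
    · rw [dif_pos h, dif_pos h, if_neg (by omega)]; ring
    · rw [dif_neg h, dif_neg h, if_pos (by omega)]; ring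

theorem sum_gt_last {k : ℕ} (L : Fin k → ℤ) (m : ℤ) (i : Fin k) :
    ∑ j ∈ Finset.univ.filter (fun j : Fin k => i < j), bump L m j =
      ∑ j ∈ Finset.univ.filter (fun j : Fin k => i < j), L j +
        if (i : ℕ) + 1 < k then m else 0 := by
  unfold bump
  rw [Finset.sum_add_distrib]
  congr 1
  split_ifs with h
  · rw [Finset.sum_eq_single (⟨k - 1, by omega⟩ : Fin k)]
    · rw [if_pos (by simp; omega)]
    · intro b _ hb
      rw [if_neg]
      intro hc; apply hb; apply Fin.ext; simp; omega
    · intro hc; exfalso; apply hc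
      refine Finset.mem_filter.2 ⟨Finset.mem_univ _, ?_⟩
      rw [Fin.lt_def]; simp; omega
  · refine Finset.sum_eq_zero fun j hj => ?_
    rw [Finset.mem_filter, Fin.lt_def] at hj
    have := j.isLt
    omega

theorem sum_gt_castSucc {k : ℕ} (L : Fin (k + 1) → ℤ) (i : Fin k) :
    ∑ j ∈ Finset.univ.filter (fun j : Fin (k + 1) => i.castSucc < j), L j =
      ∑ j ∈ Finset.univ.filter (fun j : Fin k => i < j), ini L j + L (Fin.last k) := by
  rw [Finset.sum_filter, Fin.sum_univ_castSucc, Finset.sum_filter]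
  simp [ini, Fin.castSucc_lt_last]

theorem supE_sn {k : ℕ} (L : Fin (k + 1) → ℤ) (n : Fin k → ℤ) (m : ℤ) :
    supE L (sn n m) = (L (Fin.last k) - m) * ∑ i, n i + supE (bump (ini L) m) n := by
  unfold supE
  rw [Fin.sum_univ_castSucc, dif_neg (by simp), add_zero, Finset.mul_sum,
    ← Finset.sum_add_distrib]
  refine Finset.sum_congr rfl fun i _ => ?_
  have := i.isLt
  rw [sn_castSucc, dif_pos (show ((i.castSucc : Fin (k + 1)) : ℕ) + 1 < k + 1 by simp),
    sum_gt_castSucc, sum_gt_last]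
  simp only [Fin.val_castSucc]
  rw [sn_next]
  by_cases h : (i : ℕ) + 1 < k
  · rw [dif_pos h, dif_pos h, if_pos h]; ring
  · rw [dif_neg h, dif_neg h]
    have : ∑ j ∈ Finset.univ.filter (fun j : Fin k => i < j), ini L j = 0 := by
      refine Finset.sum_eq_zero fun j hj => ?_
      rw [Finset.mem_filter, Fin.lt_def] at hj
      have := j.isLt
      omega
    rw [this]; ring

theorem supT_sn {k : ℕ} (L : Fin (k + 1) → ℤ) (a : ℤ) (n : Fin k → ℤ) (m : ℤ) :
    supT L a (sn n m) = qbinL (L (Fin.last k)) m *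
      (Qh (2 * ((L (Fin.last k) - m) * (a - m))) * supT (bump (ini L) m) (a - m) n) := by
  unfold supT
  have hs : ∑ i, sn n m i = ∑ i, n i + m := by
    rw [Fin.sum_univ_castSucc, sn_last]; simp only [sn_castSucc]
  rw [hs]
  by_cases h : ∑ i, n i = a - m
  · rw [if_pos (by omega), if_pos h, supE_sn, supP_sn, h, mul_add, Qh_add]; ring
  · rw [if_neg (by omega), if_neg h]; simp

theorem supT_fin {k : ℕ} (L : Fin k → ℤ) (a : ℤ) : (Function.support (supT L a)).Finite := by
  induction k generalizing a with
  | zero => exact Set.toFinite _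
  | succ k ih =>
    refine Set.Finite.subset (Set.Finite.biUnion (Set.finite_Icc 0 (L (Fin.last k)))
      (fun m _ => (ih (bump (ini L) m) (a - m)).image (fun n => sn n m))) ?_
    intro n hn
    rw [Function.mem_support, ← sn_ini n, supT_sn] at hn
    have h1 := qbinL_ne (left_ne_zero_of_mul hn)
    simp only [Set.mem_iUnion]
    exact ⟨n (Fin.last k), h1, ini n, right_ne_zero_of_mul (right_ne_zero_of_mul hn), sn_ini n⟩

theorem qSupL_Sr {k : ℕ} (L : Fin k → ℤ) (a : ℤ) : qSupL L a = Sr k L a := by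
  rw [qSupL_eq]
  induction k generalizing a with
  | zero =>
    rw [finsum_unique, supT, Sr]
    simp [supE, supP, Qh_zero, eq_comm]
  | succ k ih =>
    rw [← finsum_comp_equiv (snEquiv k), finsum_curry]
    · rw [Sr]
      refine finsum_congr fun m => ?_
      rw [← ih, mul_finsum, mul_finsum]
      refine finsum_congr fun n => ?_
      exact supT_sn L a n m
    · exact (supT_fin L a).preimage (snEquiv k).injective.injOn

/-! ### The matrix and finiteness -/

theorem Amat_symm (p d : ℕ) (i j : Fin (d + 2)) : Amat p d i j = Amat p d j i := by
  unfold Amat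
  split_ifs <;> omega

def Pf (d : ℕ) (N : Fin (d + 2) → ℤ) (c : ℕ) : ℤ :=
  if c = 0 then 0 else if h : c ≤ d then N ⟨c + 1, by omega⟩ else N 0 + N 1

theorem Pf_zero (d : ℕ) (N : Fin (d + 2) → ℤ) : Pf d N 0 = 0 := by simp [Pf]

theorem Pf_mid (d : ℕ) (N : Fin (d + 2) → ℤ) (c : ℕ) (h1 : 1 ≤ c) (h : c ≤ d) :
    Pf d N c = N ⟨c + 1, by omega⟩ := by
  unfold Pf; rw [if_neg (by omega), dif_pos h]

theorem Pf_last (d : ℕ) (N : Fin (d + 2) → ℤ) : Pf d N (d + 1) = N 0 + N 1 := by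
  simp [Pf]

theorem Nprime_eq (d : ℕ) (N : Fin (d + 2) → ℤ) (i : Fin (d + 1)) :
    Nprime d N i = Pf d N (i + 1) := by
  unfold Nprime Pf
  rw [if_neg (by omega)]
  by_cases h : (i : ℕ) < d
  · rw [dif_pos h, dif_pos (by omega)]
  · rw [dif_neg h, dif_neg (by omega)]

theorem Lvec_eq (d : ℕ) (N : Fin (d + 2) → ℤ) (j : Fin (d + 1)) :
    Lvec d N j = 2 * Pf d N (j + 1) - Pf d N j -
      (if (j : ℕ) < d then Pf d N (j + 2) else Pf d N (j + 1)) := by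
  unfold Lvec
  obtain ⟨F, hF⟩ : ∃ F : ℕ → ℤ, F = 
      (fun i : ℕ => (if i = (j : ℕ) then 2 * Pf d N (i + 1) else 0) -
        (if i + 1 = (j : ℕ) then Pf d N (i + 1) else 0) -
        (if i = (j : ℕ) + 1 then Pf d N (i + 1) else 0) -
        (if i = (j : ℕ) then (if (j : ℕ) = d then Pf d N (i + 1) else 0) else 0)) := ⟨_, rfl⟩
  have h1 : ∀ i : Fin (d + 1), Nprime d N i * Tmat (d + 1) i j = F i := by
    intro i
    rw [Nprime_eq, hF]
    have := i.isLt
    have := j.isLt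
    unfold Tmat
    simp only [Fin.ext_iff]
    split_ifs <;> first | omega | ring
  rw [Finset.sum_congr rfl fun i _ => h1 i, Fin.sum_univ_eq_sum_range F (d + 1), hF]
  rw [Finset.sum_sub_distrib, Finset.sum_sub_distrib, Finset.sum_sub_distrib]
  have hj := j.isLt
  simp only [Finset.sum_ite_eq', Finset.mem_range]
  rw [if_pos hj, if_pos hj]
  have h2 : ∑ i ∈ Finset.range (d + 1), (if i + 1 = (j : ℕ) then Pf d N (i + 1) else 0) =
      Pf d N j := by
    obtain h | ⟨k, hk⟩ : (j : ℕ) = 0 ∨ ∃ k, (j : ℕ) = k + 1 := by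
      rcases (j : ℕ) with _ | k
      · left; rfl
      · right; exact ⟨k, rfl⟩
    · rw [h, Pf_zero]; simp
    · rw [hk]
      simp only [Nat.add_right_cancel_iff, Finset.sum_ite_eq', Finset.mem_range]
      rw [if_pos (by omega)]
  rw [h2]
  by_cases h : (j : ℕ) < d
  · rw [if_pos (by omega), if_neg (by omega), if_pos h, sub_zero]
  · rw [if_neg (by omega), if_pos (by omega), if_neg h, sub_zero]

def colf {d : ℕ} (j : Fin (d + 2)) (c : ℕ) : ℤ :=
  if (j : ℕ) ≤ 1 then c else 2 * min ((j : ℤ) - 1) c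

theorem Amat_c (p d : ℕ) (j x : Fin (d + 2)) (c : ℕ) (h1 : 1 ≤ c) (hx : (x : ℕ) = c + 1) :
    Amat p d j x = colf j c := by
  unfold Amat colf
  split_ifs <;> omega

theorem Amat_s (p d : ℕ) (j x y : Fin (d + 2)) (hx : (x : ℕ) = 0) (hy : (y : ℕ) = 1) :
    Amat p d j x + Amat p d j y = colf j (d + 1) := by
  have := j.isLt
  unfold Amat colf
  split_ifs <;> omega

theorem Amat_d (p d : ℕ) (j x y : Fin (d + 2)) (hx : (x : ℕ) = 0) (hy : (y : ℕ) = 1) :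
    Amat p d j x - Amat p d j y = (if j = x then (2 * p - d - 1 : ℤ) else 0) -
      (if j = y then (2 * p - d - 1 : ℤ) else 0) := by
  have := j.isLt
  unfold Amat
  simp only [Fin.ext_iff]
  split_ifs <;> omega

theorem fin_v0 (d : ℕ) : ((0 : Fin (d + 2)) : ℕ) = 0 := rfl

theorem fin_v1 (d : ℕ) : ((1 : Fin (d + 2)) : ℕ) = 1 := by simp

theorem rowA_mid (p d : ℕ) (n : Fin (d + 2) → ℤ) (c : ℕ) (h1 : 1 ≤ c) (h : c ≤ d) :
    rowA p d n ⟨c + 1, by omega⟩ = ∑ j, n j * colf j c := by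
  unfold rowA
  refine Finset.sum_congr rfl fun j _ => ?_
  rw [Amat_c p d j _ c h1 rfl]

theorem rowA_sum (p d : ℕ) (n : Fin (d + 2) → ℤ) :
    rowA p d n 0 + rowA p d n 1 = ∑ j, n j * colf j (d + 1) := by
  unfold rowA
  rw [← Finset.sum_add_distrib]
  refine Finset.sum_congr rfl fun j _ => ?_
  rw [← mul_add, Amat_s p d j _ _ (fin_v0 d) (fin_v1 d)]

theorem rowA_diff (p d : ℕ) (n : Fin (d + 2) → ℤ) :
    rowA p d n 0 - rowA p d n 1 = (2 * p - d - 1) * (n 0 - n 1) := by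
  have : (2 * p - d - 1) * (n 0 - n 1) = ∑ j, n j *
     ((if j = 0 then (2 * p - d - 1 : ℤ) else 0) - (if j = 1 then (2 * p - d - 1 : ℤ) else 0)) := by
    simp only [mul_sub, Finset.sum_sub_distrib, mul_ite, mul_zero, Finset.sum_ite_eq',
      Finset.mem_univ, if_true]
    ring
  rw [this]
  unfold rowA
  rw [← Finset.sum_sub_distrib]
  refine Finset.sum_congr rfl fun j _ => ?_
  rw [← mul_sub, Amat_d p d j _ _ (fin_v0 d) (fin_v1 d)]

def Rf (d : ℕ) (n : Fin (d + 2) → ℤ) (c : ℕ) : ℤ := ∑ j, n j * colf j c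

theorem Rf_zero (d : ℕ) (n : Fin (d + 2) → ℤ) : Rf d n 0 = 0 := by
  unfold Rf
  refine Finset.sum_eq_zero fun j _ => ?_
  have : colf j 0 = 0 := by unfold colf; push_cast; split_ifs <;> omega
  rw [this, mul_zero]

theorem Rf_mid (d : ℕ) (n : Fin (d + 2) → ℤ) (c : ℕ) (h : c + 1 ≤ d) :
    2 * Rf d n (c + 1) - Rf d n c - Rf d n (c + 2) = 2 * n ⟨c + 2, by omega⟩ := by
  have : 2 * n ⟨c + 2, by omega⟩ = ∑ j, n j * (if j = ⟨c + 2, by omega⟩ then 2 else 0) := by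
    simp only [mul_ite, mul_zero, Finset.sum_ite_eq', Finset.mem_univ, if_true]
    ring
  rw [this]
  unfold Rf
  rw [Finset.mul_sum, ← Finset.sum_sub_distrib, ← Finset.sum_sub_distrib]
  refine Finset.sum_congr rfl fun j _ => ?_
  have : 2 * colf j (c + 1) - colf j c - colf j (c + 2) =
      if j = ⟨c + 2, by omega⟩ then 2 else 0 := by
    unfold colf
    simp only [Fin.ext_iff]
    push_cast
    split_ifs <;> omega
  rw [← this]; ring

theorem Rf_last (d : ℕ) (n : Fin (d + 2) → ℤ) :
    Rf d n (d + 1) - Rf d n d = n 0 + n 1 := by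
  have : n 0 + n 1 = ∑ j, n j * ((if j = 0 then 1 else 0) + (if j = 1 then 1 else 0)) := by
    simp only [mul_add, Finset.sum_add_distrib, mul_ite, mul_zero, Finset.sum_ite_eq',
      Finset.mem_univ, if_true]
    ring
  rw [this]
  unfold Rf
  rw [← Finset.sum_sub_distrib]
  refine Finset.sum_congr rfl fun j _ => ?_
  rw [← mul_sub]
  congr 1
  have := j.isLt
  unfold colf
  simp only [Fin.ext_iff, Fin.val_zero, Fin.val_one]
  push_cast
  split_ifs <;> omega

theorem Rf_lower (d : ℕ) (n : Fin (d + 2) → ℤ) (hn : ∀ j : Fin (d + 2), 2 ≤ (j : ℕ) → 0 ≤ n j)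
    (j : Fin (d + 2)) (hj : 2 ≤ (j : ℕ)) :
    (d + 1) * (n 0 + n 1) + n j ≤ Rf d n (d + 1) := by
  have : (d + 1) * (n 0 + n 1) + n j = ∑ i, n i * ((if i = 0 then (d + 1 : ℤ) else 0) +
      (if i = 1 then (d + 1 : ℤ) else 0) + (if i = j then 1 else 0)) := by
    simp only [mul_add, Finset.sum_add_distrib, mul_ite, mul_zero, Finset.sum_ite_eq',
      Finset.mem_univ, if_true]
    ring
  rw [this]
  unfold Rf
  refine Finset.sum_le_sum fun i _ => ?_
  have hi := i.isLt
  by_cases h : 2 ≤ (i : ℕ)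
  · refine mul_le_mul_of_nonneg_left ?_ (hn i h)
    unfold colf
    simp only [Fin.ext_iff, Fin.val_zero, Fin.val_one]
    push_cast
    split_ifs <;> omega
  · apply le_of_eq
    congr 1
    unfold colf
    simp only [Fin.ext_iff, Fin.val_zero, Fin.val_one]
    push_cast
    split_ifs <;> omega

theorem Rf_lower' (d : ℕ) (n : Fin (d + 2) → ℤ) (hn : ∀ j : Fin (d + 2), 2 ≤ (j : ℕ) → 0 ≤ n j) :
    (d + 1) * (n 0 + n 1) ≤ Rf d n (d + 1) := by
  have : (d + 1) * (n 0 + n 1) = ∑ i, n i * ((if i = 0 then (d + 1 : ℤ) else 0) +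
      (if i = 1 then (d + 1 : ℤ) else 0)) := by
    simp only [mul_add, Finset.sum_add_distrib, mul_ite, mul_zero, Finset.sum_ite_eq',
      Finset.mem_univ, if_true]
    ring
  rw [this]
  unfold Rf
  refine Finset.sum_le_sum fun i _ => ?_
  have hi := i.isLt
  by_cases h : 2 ≤ (i : ℕ)
  · refine mul_le_mul_of_nonneg_left ?_ (hn i h)
    unfold colf
    simp only [Fin.ext_iff, Fin.val_zero, Fin.val_one]
    push_cast
    split_ifs <;> omega
  · apply le_of_eq
    congr 1
    unfold colf
    simp only [Fin.ext_iff, Fin.val_zero, Fin.val_one]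
    push_cast
    split_ifs <;> omega

def qd (p d : ℕ) (n : Fin (d + 2) → ℤ) : ℤ := ∑ i, ∑ j, n i * Amat p d i j * n j

def tL (p d : ℕ) (N n : Fin (d + 2) → ℤ) : LL :=
  Zv (n 0 - n 1) * Qh (qd p d n) * ∏ a, qbinPlusL (N a + n a - rowA p d n a) (n a)

theorem tL_fin (p d : ℕ) (hd : d < 2 * p - 2)
    (N : Fin (d + 2) → ℤ) (hL : ∀ j, 0 ≤ Lvec d N j) :
    (Function.support (tL p d N)).Finite := by
  set B1 : ℤ := |2 * N 0 - Pf d N d| + |2 * N 1 - Pf d N d| + 1 with hB1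
  have hB1p : 1 ≤ B1 := by
    have := abs_nonneg (2 * N 0 - Pf d N d); have := abs_nonneg (2 * N 1 - Pf d N d); omega
  set B : ℤ := |Pf d N (d + 1)| + 2 * (d + 1) * B1 with hB
  refine (Set.finite_Icc (fun _ : Fin (d + 2) => -B) (fun _ => B)).subset ?_
  intro n hn
  rw [Function.mem_support] at hn
  have hq : ∀ a, rowA p d n a ≤ N a ∧ (0 ≤ n a ∨ N a - rowA p d n a + n a < 0) := by
    intro a
    have h1 := right_ne_zero_of_mul hn
    have h2 := (Finset.prod_ne_zero_iff.1 h1) a (Finset.mem_univ _)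
    have := qb_ne _ _ h2
    omega
  clear hn
  -- the gaps
  have hμ : ∀ c, c ≤ d + 1 → 0 ≤ Pf d N c - Rf d n c := by
    intro c hc
    by_cases h0 : c = 0
    · subst h0; rw [Pf_zero, Rf_zero]; simp
    · by_cases h1 : c ≤ d
      · rw [Pf_mid _ _ _ (by omega) h1]
        have := (hq ⟨c + 1, by omega⟩).1
        rw [rowA_mid _ _ _ _ (by omega) h1] at this
        unfold Rf; omega
      · have : c = d + 1 := by omega
        subst this
        rw [Pf_last]
        have e := rowA_sum p d n
        have := (hq 0).1
        have := (hq 1).1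
        unfold Rf; omega
  have hpos : ∀ j : Fin (d + 2), 2 ≤ (j : ℕ) → 0 ≤ n j := by
    intro j hj
    obtain ⟨c, hc⟩ : ∃ c, (j : ℕ) = c + 2 := ⟨j - 2, by omega⟩
    have hjl := j.isLt
    have hje : j = ⟨c + 2, by omega⟩ := Fin.ext hc
    by_contra hneg
    have h1 := (hq j).2
    have h2 : N j - rowA p d n j = Pf d N (c + 1) - Rf d n (c + 1) := by
      rw [hje, rowA_mid _ _ _ (c + 1) (by omega) (by omega),
        Pf_mid _ _ (c + 1) (by omega) (by omega)]; rfl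
    have h3 := Rf_mid d n c (by omega)
    rw [← hje] at h3
    have h4 := hL ⟨c, by omega⟩
    rw [Lvec_eq, if_pos (by simp; omega)] at h4
    simp only at h4
    have h5 := hμ c (by omega)
    have h6 := hμ (c + 2) (by omega)
    omega
  have hlast := Rf_last d n
  have hRe : Rf d n (d + 1) = rowA p d n 0 + rowA p d n 1 := (rowA_sum p d n).symm
  have hdiff := rowA_diff p d n
  have hPl := Pf_last d N
  have hLl := hL (Fin.last d)
  rw [Lvec_eq, if_neg (by simp)] at hLl
  simp only [Fin.val_last] at hLl
  have hμd := hμ d (by omega)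
  have q0 := hq 0
  have q1 := hq 1
  have hκ : (1 : ℤ) ≤ 2 * p - d - 2 := by omega
  have l0 : -B1 ≤ n 0 := by
    by_contra hc
    have h1 : n 0 < 0 := by omega
    have q0' : N 0 - rowA p d n 0 + n 0 < 0 := by omega
    have h2 : 0 ≤ n 1 := by omega
    have hm := mul_nonneg (show (0 : ℤ) ≤ 2 * p - d - 3 by omega) (show 0 ≤ n 1 - n 0 by omega)
    have a := neg_abs_le (2 * N 0 - Pf d N d)
    have b := abs_nonneg (2 * N 1 - Pf d N d)
    nlinarith
  have l1 : -B1 ≤ n 1 := by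
    by_contra hc
    have h1 : n 1 < 0 := by omega
    have q1' : N 1 - rowA p d n 1 + n 1 < 0 := by omega
    have h2 : 0 ≤ n 0 := by omega
    have hm := mul_nonneg (show (0 : ℤ) ≤ 2 * p - d - 3 by omega) (show 0 ≤ n 0 - n 1 by omega)
    have a := neg_abs_le (2 * N 1 - Pf d N d)
    have b := abs_nonneg (2 * N 0 - Pf d N d)
    nlinarith
  have hμl := hμ (d + 1) le_rfl
  have habs := le_abs_self (Pf d N (d + 1))
  have habs' := abs_nonneg (Pf d N (d + 1))
  have hd0 : (0 : ℤ) ≤ d := by positivity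
  have hBB : B1 ≤ B := by nlinarith
  have key : ∀ a, -B ≤ n a ∧ n a ≤ B := by
    intro a
    by_cases h : 2 ≤ (a : ℕ)
    · have := Rf_lower d n hpos a h
      have := hpos a h
      constructor
      · omega
      · nlinarith
    · have hl := Rf_lower' d n hpos
      have ha : a = 0 ∨ a = 1 := by
        rcases Nat.lt_or_ge (a : ℕ) 1 with h | h
        · left; apply Fin.ext; rw [fin_v0]; omega
        · right; apply Fin.ext; rw [fin_v1]; omega
      rcases ha with rfl | rfl
      · refine ⟨by omega, ?_⟩
        by_contra hc
        nlinarith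
      · refine ⟨by omega, ?_⟩
        by_contra hc
        nlinarith
  exact ⟨fun a => (key a).1, fun a => (key a).2⟩

/-! ### Left-hand side: recurrence and linking -/

def fL (p d : ℕ) (N : Fin (d + 2) → ℤ) : LL := ∑ᶠ n, tL p d N n

def e0 (d : ℕ) : Fin (d + 2) → ℤ := fun i => if (i : ℕ) = 0 then 1 else 0

theorem e0_zero (d : ℕ) : e0 d 0 = 1 := by simp [e0]

theorem e0_succ (d : ℕ) (i : Fin (d + 1)) : e0 d i.succ = 0 := by simp [e0]

theorem e0_one (d : ℕ) : e0 d 1 = 0 := by simp [e0]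

theorem sum_e0 (d : ℕ) (f : Fin (d + 2) → ℤ) : ∑ i, e0 d i * f i = f 0 := by
  rw [Fin.sum_univ_succ, e0_zero]
  simp [e0_succ]

theorem rowA_sub_e0 (p d : ℕ) (n : Fin (d + 2) → ℤ) (a : Fin (d + 2)) :
    rowA p d (n - e0 d) a = rowA p d n a - Amat p d 0 a := by
  unfold rowA
  simp only [Pi.sub_apply, sub_mul, Finset.sum_sub_distrib]
  rw [sum_e0 d fun j => Amat p d j a]

theorem qd_eq (p d : ℕ) (n : Fin (d + 2) → ℤ) : qd p d n = ∑ j, rowA p d n j * n j := by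
  unfold qd rowA
  rw [Finset.sum_comm]
  simp only [Finset.sum_mul]

theorem rowA_symm (p d : ℕ) (n : Fin (d + 2) → ℤ) (a : Fin (d + 2)) :
    ∑ j, Amat p d a j * n j = rowA p d n a := by
  unfold rowA
  refine Finset.sum_congr rfl fun j _ => ?_
  rw [Amat_symm, mul_comm]

theorem Amat_00 (p d : ℕ) : Amat p d 0 0 = p := by simp [Amat]

theorem Amat_01 (p d : ℕ) : Amat p d 0 1 = -p + d + 1 := by simp [Amat]

theorem qd_sub_e0 (p d : ℕ) (n : Fin (d + 2) → ℤ) :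
    qd p d (n - e0 d) = qd p d n - 2 * rowA p d n 0 + p := by
  have h : qd p d (n - e0 d) = ∑ j, rowA p d n j * n j - ∑ j, e0 d j * rowA p d n j -
      ∑ j, Amat p d 0 j * n j + ∑ j, e0 d j * Amat p d 0 j := by
    rw [qd_eq, ← Finset.sum_sub_distrib, ← Finset.sum_sub_distrib, ← Finset.sum_add_distrib]
    refine Finset.sum_congr rfl fun j _ => ?_
    rw [rowA_sub_e0, Pi.sub_apply]
    ring
  rw [h, sum_e0, sum_e0, rowA_symm, ← qd_eq, Amat_00]
  ring

def A0 (p d : ℕ) : Fin (d + 2) → ℤ := fun a => Amat p d 0 a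

theorem A0_apply (p d : ℕ) (a : Fin (d + 2)) : A0 p d a = Amat p d 0 a := rfl

theorem tL_rec (p d : ℕ) (N n : Fin (d + 2) → ℤ) : tL p d N n = tL p d (N - e0 d) n +
    Zv 1 * Qh (2 * N 0 - p) * tL p d (N - A0 p d) (n - e0 d) := by
  unfold tL
  have sp : ∀ f : Fin (d + 2) → LL, ∏ a, f a = f 0 * ∏ i : Fin (d + 1), f i.succ :=
    fun f => Fin.prod_univ_succ f
  rw [sp fun a => qbinPlusL (N a + n a - rowA p d n a) (n a),
    sp fun a => qbinPlusL ((N - e0 d) a + n a - rowA p d n a) (n a), sp, qd_sub_e0]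
  simp only [rowA_sub_e0, Pi.sub_apply, A0_apply, e0_succ, e0_zero, e0_one, sub_zero]
  have h : ∀ i : Fin (d + 1), N i.succ - Amat p d 0 i.succ + n i.succ -
      (rowA p d n i.succ - Amat p d 0 i.succ) = N i.succ + n i.succ - rowA p d n i.succ := by
    intro i; ring
  simp only [h]
  rw [qb_P1 (N 0 + n 0 - rowA p d n 0)]
  have h1 : N 0 - 1 + n 0 - rowA p d n 0 = N 0 + n 0 - rowA p d n 0 - 1 := by ring
  have h2 : N 0 - Amat p d 0 0 + (n 0 - 1) - (rowA p d n 0 - Amat p d 0 0) =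
    N 0 + n 0 - rowA p d n 0 - 1 := by ring
  have h3 : Zv (n 0 - n 1) = Zv 1 * Zv (n 0 - 1 - n 1) := by rw [← Zv_add]; congr 1; ring
  have h4 : Qh (qd p d n) * Qh (2 * (N 0 + n 0 - rowA p d n 0 - n 0)) =
      Qh (2 * N 0 - p) * Qh (qd p d n - 2 * rowA p d n 0 + p) := by
    rw [← Qh_add, ← Qh_add]; congr 1; ring
  rw [h1, h2, h3]
  linear_combination (Zv 1 * Zv (n 0 - 1 - n 1) *
      qbinPlusL (N 0 + n 0 - rowA p d n 0 - 1) (n 0 - 1) *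
      ∏ i : Fin (d + 1), qbinPlusL (N i.succ + n i.succ - rowA p d n i.succ) (n i.succ)) * h4

theorem fL_rec (p d : ℕ) (hd : d < 2 * p - 2) (N : Fin (d + 2) → ℤ)
    (h1 : ∀ j, 0 ≤ Lvec d (N - e0 d) j) (h2 : ∀ j, 0 ≤ Lvec d (N - A0 p d) j) :
    fL p d N = fL p d (N - e0 d) + Zv 1 * Qh (2 * N 0 - p) * fL p d (N - A0 p d) := by
  unfold fL
  have hf := tL_fin p d hd _ h2
  have hf' : (Function.support fun n => tL p d (N - A0 p d) (n - e0 d)).Finite :=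
    hf.preimage (f := fun n : Fin (d + 2) → ℤ => n - e0 d) (sub_left_injective.injOn)
  rw [finsum_congr (tL_rec p d N), finsum_add_distrib (tL_fin p d hd _ h1), ← mul_finsum]
  · congr 2
    exact finsum_comp_equiv (f := fun n => tL p d (N - A0 p d) n) (Equiv.subRight (e0 d))
  · refine hf'.subset fun n hn => ?_
    exact right_ne_zero_of_mul hn

def e01 (d : ℕ) : Fin (d + 2) → ℤ := fun i => if (i : ℕ) ≤ 1 then 1 else 0

theorem e01_zero (d : ℕ) : e01 d 0 = 1 := by simp [e01]

theorem e01_one (d : ℕ) : e01 d 1 = 1 := by simp [e01]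

theorem e01_succ (d : ℕ) (i : Fin d) : e01 d i.succ.succ = 0 := by simp [e01]

theorem sum_e01 (d : ℕ) (f : Fin (d + 2) → ℤ) : ∑ i, e01 d i * f i = f 0 + f 1 := by
  rw [Fin.sum_univ_succ, Fin.sum_univ_succ, Fin.succ_zero_eq_one, e01_zero, e01_one]
  simp [e01_succ]

def lkE (d : ℕ) : (Fin (d + 2) → ℤ) × ℤ ≃ (Fin (d + 2 + 1) → ℤ) where
  toFun x := sn (x.1 - fun i => x.2 * e01 d i) x.2
  invFun m := (ini m + fun i => m (Fin.last _) * e01 d i, m (Fin.last _))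
  left_inv x := by
    ext <;> simp [ini_sn, sn_last]
  right_inv m := by
    simp [sn_ini]

theorem sn_0 {d : ℕ} (n : Fin (d + 2) → ℤ) (m : ℤ) : sn n m 0 = n 0 := sn_castSucc n m 0

theorem sn_1 {d : ℕ} (n : Fin (d + 2) → ℤ) (m : ℤ) : sn n m 1 = n 1 := sn_castSucc n m 1

theorem colf_castSucc {d : ℕ} (j : Fin (d + 2)) (c : ℕ) :
    colf (d := d + 1) (j.castSucc) c = colf j c := rfl

theorem colf_last (d : ℕ) : colf (d := d + 1) (Fin.last (d + 2)) (d + 1) = 2 * (d + 1) := by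
  unfold colf
  simp only [Fin.val_last]
  push_cast
  omega

theorem Amat_cc (p d : ℕ) (a b : Fin (d + 2)) : Amat p (d + 1) a.castSucc b.castSucc =
    Amat p d a b + if ((a : ℕ) = 0 ∧ (b : ℕ) = 1) ∨ ((a : ℕ) = 1 ∧ (b : ℕ) = 0) then 1 else 0 := by
  unfold Amat
  simp only [Fin.val_castSucc]
  push_cast
  split_ifs <;> omega

theorem Amat_cl (p d : ℕ) (j : Fin (d + 2 + 1)) :
    Amat p (d + 1) j (Fin.last (d + 2)) = colf (d := d + 1) j (d + 1) :=
  Amat_c p (d + 1) j _ (d + 1) (by omega) rfl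

theorem Amat_01c (p d : ℕ) (b : Fin (d + 2)) :
    Amat p d 0 b + Amat p d 1 b = colf b (d + 1) := by
  rw [Amat_symm p d 0, Amat_symm p d 1]
  exact Amat_s p d b _ _ (fin_v0 d) (fin_v1 d)

def del (d : ℕ) (m : Fin (d + 2) → ℤ) (a : Fin (d + 2)) : ℤ :=
  if (a : ℕ) = 0 then m 1 else if (a : ℕ) = 1 then m 0 else 0

theorem rowA_sub_e01 (p d : ℕ) (n : Fin (d + 2) → ℤ) (k : ℤ) (a : Fin (d + 2)) :
    rowA p d (n - fun i => k * e01 d i) a = rowA p d n a - k * colf a (d + 1) := by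
  unfold rowA
  simp only [Pi.sub_apply, sub_mul, Finset.sum_sub_distrib, mul_assoc]
  rw [← Finset.mul_sum, sum_e01 d fun j => Amat p d j a, Amat_01c]

theorem sum_del (d : ℕ) (m : Fin (d + 2) → ℤ) (a : Fin (d + 2)) :
    (∑ j, m j * if ((j : ℕ) = 0 ∧ (a : ℕ) = 1) ∨ ((j : ℕ) = 1 ∧ (a : ℕ) = 0) then (1 : ℤ) else 0) =
      del d m a := by
  rw [Fin.sum_univ_succ, Fin.sum_univ_succ, Fin.succ_zero_eq_one]
  unfold del
  by_cases h0 : (a : ℕ) = 0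
  · simp [h0]
  · by_cases h1 : (a : ℕ) = 1
    · simp [h1]
    · simp [h0, h1]

theorem rowA_cs (p d : ℕ) (n : Fin (d + 2) → ℤ) (k : ℤ) (a : Fin (d + 2)) :
    rowA p (d + 1) (lkE d (n, k)) a.castSucc =
      rowA p d n a + del d (n - fun i => k * e01 d i) a := by
  have h := rowA_sub_e01 p d n k a
  unfold lkE
  simp only [Equiv.coe_fn_mk]
  unfold rowA at h ⊢
  rw [Fin.sum_univ_castSucc, Amat_symm, Amat_cl]
  simp only [sn_castSucc, sn_last, Amat_cc, mul_add, Finset.sum_add_distrib, colf_castSucc]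
  rw [sum_del, h]
  ring

theorem rowA_la (p d : ℕ) (n : Fin (d + 2) → ℤ) (k : ℤ) :
    rowA p (d + 1) (lkE d (n, k)) (Fin.last (d + 2)) = rowA p d n 0 + rowA p d n 1 := by
  have h0 := rowA_sub_e01 p d n k 0
  have h1 := rowA_sub_e01 p d n k 1
  have h2 := rowA_sum p d (n - fun i => k * e01 d i)
  have h3 : colf (0 : Fin (d + 2)) (d + 1) = d + 1 := by simp [colf]
  have h4 : colf (1 : Fin (d + 2)) (d + 1) = d + 1 := by simp [colf]
  rw [h3] at h0
  rw [h4] at h1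
  have : rowA p (d + 1) (lkE d (n, k)) (Fin.last (d + 2)) =
      ∑ j, (n - fun i => k * e01 d i) j * colf j (d + 1) + k * (2 * (d + 1)) := by
    unfold lkE
    simp only [Equiv.coe_fn_mk]
    unfold rowA
    simp only [Amat_cl]
    rw [Fin.sum_univ_castSucc, colf_last]
    simp only [sn_castSucc, sn_last, colf_castSucc]
  rw [this, ← h2, h0, h1]
  ring

theorem qd_lk (p d : ℕ) (n : Fin (d + 2) → ℤ) (k : ℤ) :
    qd p (d + 1) (lkE d (n, k)) = qd p d n + 2 * ((n 0 - k) * (n 1 - k)) := by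
  rw [qd_eq, Fin.sum_univ_castSucc, rowA_la]
  simp only [rowA_cs]
  have h : ∀ a : Fin (d + 2), lkE d (n, k) a.castSucc = n a - k * e01 d a :=
    fun a => sn_castSucc _ _ _
  have h' : lkE d (n, k) (Fin.last (d + 2)) = k := sn_last _ _
  simp only [h]
  rw [h', qd_eq]
  have h1 : ∑ a, (rowA p d n a + del d (n - fun i => k * e01 d i) a) * (n a - k * e01 d a) =
      ∑ a, rowA p d n a * n a - k * ∑ a, e01 d a * rowA p d n a +
        ∑ a, del d (n - fun i => k * e01 d i) a * (n a - k * e01 d a) := by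
    rw [Finset.mul_sum, ← Finset.sum_sub_distrib, ← Finset.sum_add_distrib]
    exact Finset.sum_congr rfl fun a _ => by ring
  have h2 : ∑ a, del d (n - fun i => k * e01 d i) a * (n a - k * e01 d a) =
      2 * ((n 0 - k) * (n 1 - k)) := by
    rw [Fin.sum_univ_succ, Fin.sum_univ_succ, Fin.succ_zero_eq_one]
    simp [del, e01_zero, e01_one]
    ring
  rw [h1, h2, sum_e01]
  ring

theorem tL_link (p d : ℕ) (N n : Fin (d + 2) → ℤ) (k : ℤ) :
    tL p (d + 1) (sn N (N 0 + N 1)) (lkE d (n, k)) =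
      Zv (n 0 - n 1) * Qh (qd p d n) *
        (∏ i : Fin d, qbinPlusL (N i.succ.succ + n i.succ.succ - rowA p d n i.succ.succ)
          (n i.succ.succ)) *
        lk (N 0 + n 0 - rowA p d n 0) (N 1 + n 1 - rowA p d n 1) (n 0) (n 1) k := by
  have h : ∀ a : Fin (d + 2), lkE d (n, k) a.castSucc = n a - k * e01 d a :=
    fun a => sn_castSucc _ _ _
  have h' : lkE d (n, k) (Fin.last (d + 2)) = k := sn_last _ _
  have h0 : lkE d (n, k) 0 = n 0 - k := by
    have := h 0; rw [e01_zero, mul_one] at this; exact this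
  have h1 : lkE d (n, k) 1 = n 1 - k := by
    have := h 1; rw [e01_one, mul_one] at this; exact this
  unfold tL
  rw [Fin.prod_univ_castSucc, rowA_la, qd_lk, h0, h1]
  simp only [rowA_cs, h, h', sn_castSucc, sn_last]
  rw [Fin.prod_univ_succ, Fin.prod_univ_succ, Fin.succ_zero_eq_one]
  have d0 : del d (n - fun i => k * e01 d i) 0 = n 1 - k := by simp [del, e01_one]
  have d1 : del d (n - fun i => k * e01 d i) 1 = n 0 - k := by simp [del, e01_zero]
  have d2 : ∀ i : Fin d, del d (n - fun i => k * e01 d i) i.succ.succ = 0 := by simp [del]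
  simp only [d0, d1, d2, e01_zero, e01_one, e01_succ, mul_one, mul_zero, sub_zero, add_zero]
  unfold lk
  have t0 : N 0 + (n 0 - k) - (rowA p d n 0 + (n 1 - k)) = N 0 + n 0 - rowA p d n 0 - n 1 := by ring
  have t1 : N 1 + (n 1 - k) - (rowA p d n 1 + (n 0 - k)) = N 1 + n 1 - rowA p d n 1 - n 0 := by ring
  have t2 : N 0 + n 0 - rowA p d n 0 + (N 1 + n 1 - rowA p d n 1) - n 0 - n 1 + k =
    N 0 + N 1 + k - (rowA p d n 0 + rowA p d n 1) := by ring
  have t3 : n 0 - k - (n 1 - k) = n 0 - n 1 := by ring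
  rw [t0, t1, t2, t3, Qh_add]
  ring

theorem fL_link (p d : ℕ) (hd : d + 1 < 2 * p - 2) (N : Fin (d + 2) → ℤ)
    (hL : ∀ j, 0 ≤ Lvec (d + 1) (sn N (N 0 + N 1)) j) :
    fL p (d + 1) (sn N (N 0 + N 1)) = fL p d N := by
  unfold fL
  have hf := tL_fin p (d + 1) hd _ hL
  rw [← finsum_comp_equiv (lkE d), finsum_curry]
  · refine finsum_congr fun n => ?_
    rw [finsum_congr (tL_link p d N n), ← mul_finsum, linking]
    unfold tL
    rw [Fin.prod_univ_succ, Fin.prod_univ_succ, Fin.succ_zero_eq_one]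
    ring
  · exact hf.preimage (f := lkE d) ((lkE d).injective.injOn)

/-! ### Right-hand side and the main induction -/

def gR (p d : ℕ) (N : Fin (d + 2) → ℤ) : LL :=
  ∑ᶠ a : ℤ, Zv a * Qh ((p : ℤ) * a ^ 2) * qSupL (Lvec d N) ((p : ℤ) * a + N 1)

theorem Pf_top (d : ℕ) (N : Fin (d + 2) → ℤ) (c : ℕ) (h : d + 1 ≤ c) : Pf d N c = N 0 + N 1 := by
  unfold Pf
  rw [if_neg (by omega), dif_neg (by omega)]

theorem Lvec_eq' (d : ℕ) (N : Fin (d + 2) → ℤ) (j : Fin (d + 1)) :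
    Lvec d N j = 2 * Pf d N (j + 1) - Pf d N j - Pf d N (j + 2) := by
  rw [Lvec_eq]
  split_ifs with h
  · rfl
  · rw [Pf_top d N (j + 1) (by omega), Pf_top d N (j + 2) (by omega)]

theorem Pf_sub (d : ℕ) (N M : Fin (d + 2) → ℤ) (c : ℕ) :
    Pf d (N - M) c = Pf d N c - Pf d M c := by
  unfold Pf
  split_ifs
  · rfl
  · rfl
  · simp only [Pi.sub_apply]; ring

theorem Pf_e0 (d c : ℕ) : Pf d (e0 d) c = if c ≤ d then 0 else 1 := by
  unfold Pf
  split_ifs with h1 h2 h3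
  · rfl
  · omega
  · simp [e0]
  · rw [e0_zero, e0_one]; rfl

theorem Pf_A0 (p d c : ℕ) : Pf d (A0 p d) c = if c ≤ d then (c : ℤ) else d + 1 := by
  by_cases h0 : c = 0
  · subst h0; rw [Pf_zero]; simp
  · by_cases h : c ≤ d
    · rw [Pf_mid d _ c (by omega) h, if_pos h, A0_apply, Amat_c p d 0 _ c (by omega) rfl]
      simp [colf]
    · rw [Pf_top d _ c (by omega), if_neg h, A0_apply, A0_apply, Amat_00, Amat_01]
      ring

theorem wt_Lvec (d : ℕ) (N : Fin (d + 2) → ℤ) : wt (Lvec d N) = N 0 + N 1 := by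
  have key : ∀ m : ℕ, ∑ i ∈ Finset.range m,
      ((i : ℤ) + 1) * (2 * Pf d N (i + 1) - Pf d N i - Pf d N (i + 2)) =
      (m + 1) * Pf d N m - m * Pf d N (m + 1) := by
    intro m
    induction m with
    | zero => simp [Pf_zero]
    | succ m ih => rw [Finset.sum_range_succ, ih]; push_cast; ring
  unfold wt
  simp only [Lvec_eq']
  rw [Fin.sum_univ_eq_sum_range
    (fun i : ℕ => ((i : ℤ) + 1) * (2 * Pf d N (i + 1) - Pf d N i - Pf d N (i + 2))) (d + 1), key,
    Pf_top d N (d + 1) le_rfl, Pf_top d N (d + 1 + 1) (by omega)]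
  push_cast
  ring

theorem Lvec_A0 (p d : ℕ) (N : Fin (d + 2) → ℤ) : Lvec d N = bump (Lvec d (N - A0 p d)) 1 := by
  funext j
  have := j.isLt
  unfold bump
  rw [Lvec_eq', Lvec_eq', Pf_sub, Pf_sub, Pf_sub, Pf_A0, Pf_A0, Pf_A0]
  push_cast
  split_ifs <;> omega

theorem Lvec_e0 (p d : ℕ) (N : Fin (d + 2) → ℤ) : Lvec d (N - e0 d) =
    sn (bump (ini (Lvec d (N - A0 p d))) 1) (Lvec d (N - A0 p d) (Fin.last d)) := by
  funext j
  refine Fin.lastCases ?_ (fun j => ?_) j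
  · rw [sn_last, Lvec_eq', Lvec_eq', Pf_sub, Pf_sub, Pf_sub, Pf_sub, Pf_sub, Pf_sub,
      Pf_A0, Pf_A0, Pf_A0, Pf_e0, Pf_e0, Pf_e0]
    simp only [Fin.val_last]
    push_cast
    split_ifs <;> omega
  · rw [sn_castSucc]
    have := j.isLt
    unfold bump ini
    rw [Lvec_eq', Lvec_eq', Pf_sub, Pf_sub, Pf_sub, Pf_sub, Pf_sub, Pf_sub,
      Pf_A0, Pf_A0, Pf_A0, Pf_e0, Pf_e0, Pf_e0]
    simp only [Fin.val_castSucc]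
    push_cast
    split_ifs <;> omega

theorem gR_fin (p d : ℕ) (hp : 2 ≤ p) (N : Fin (d + 2) → ℤ) (hL : ∀ j, 0 ≤ Lvec d N j) :
    (Function.support (fun a : ℤ =>
        Zv a * Qh ((p : ℤ) * a ^ 2) * qSupL (Lvec d N) ((p : ℤ) * a + N 1))).Finite := by
  refine finite_of_bdd (-|N 1|) (|N 0|) fun a ha => ?_
  have h := right_ne_zero_of_mul ha
  rw [qSupL_Sr] at h
  have h := Sr_ne _ _ hL h
  rw [wt_Lvec] at h
  have hp' : (2 : ℤ) ≤ p := by exact_mod_cast hp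
  have a1 := le_abs_self (N 1)
  have a2 := abs_nonneg (N 1)
  have a3 := le_abs_self (N 0)
  have a4 := abs_nonneg (N 0)
  constructor
  · by_contra hc
    nlinarith
  · by_contra hc
    nlinarith

theorem gR_rec (p d : ℕ) (hp : 2 ≤ p) (N : Fin (d + 2) → ℤ)
    (h1 : ∀ j, 0 ≤ Lvec d (N - e0 d) j) (h2 : ∀ j, 0 ≤ Lvec d (N - A0 p d) j) :
    gR p d N = gR p d (N - e0 d) + Zv 1 * Qh (2 * N 0 - p) * gR p d (N - A0 p d) := by
  unfold gR
  rw [mul_finsum, ← finsum_shift' (fun i => Zv 1 * Qh (2 * N 0 - p) *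
    (Zv i * Qh ((p : ℤ) * i ^ 2) * qSupL (Lvec d (N - A0 p d)) ((p : ℤ) * i + (N - A0 p d) 1))) (-1),
    ← finsum_add_distrib (gR_fin p d hp _ h1)]
  · refine finsum_congr fun a => ?_
    have hw := wt_Lvec d N
    rw [Lvec_A0 p d N, wt_bump] at hw
    push_cast at hw
    simp only [qSupL_Sr]
    rw [Lvec_A0 p d N, Sr_rec _ h2, ← Lvec_e0]
    have e1 : (N - e0 d) 1 = N 1 := by rw [Pi.sub_apply, e0_one, sub_zero]
    have e2 : (p : ℤ) * (a + -1) + (N - A0 p d) 1 = p * a + N 1 - d - 1 := by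
      rw [Pi.sub_apply, A0_apply, Amat_01]; ring
    have e3 : Zv a = Zv 1 * Zv (a + -1) := by rw [← Zv_add]; congr 1; ring
    have e4 : Qh ((p : ℤ) * a ^ 2) * Qh (2 * (wt (Lvec d (N - A0 p d)) + d + 1 - (p * a + N 1))) =
        Qh (2 * N 0 - p) * Qh ((p : ℤ) * (a + -1) ^ 2) := by
      rw [← Qh_add, ← Qh_add]; congr 1; linear_combination 2 * hw
    rw [e1, e2, e3]
    linear_combination (Zv 1 * Zv (a + -1) *
      Sr (d + 1) (Lvec d (N - A0 p d)) (p * a + N 1 - d - 1)) * e4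
  · have hf := gR_fin p d hp _ h2
    refine (hf.preimage (f := fun k : ℤ => k + -1) (fun a _ b _ h => by simpa using h)).subset ?_
    intro a ha
    exact right_ne_zero_of_mul ha

theorem Pf_sn (d : ℕ) (N : Fin (d + 2) → ℤ) (c : ℕ) :
    Pf (d + 1) (sn N (N 0 + N 1)) c = Pf d N c := by
  by_cases h0 : c = 0
  · subst h0; rw [Pf_zero, Pf_zero]
  · rcases Nat.lt_trichotomy c (d + 1) with h | h | h
    · rw [Pf_mid _ _ c (by omega) (by omega), Pf_mid _ _ c (by omega) (by omega)]
      exact sn_castSucc N _ ⟨c + 1, by omega⟩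
    · subst h
      rw [Pf_mid _ _ _ (by omega) (by omega), Pf_top _ _ _ le_rfl]
      exact sn_last N _
    · rw [Pf_top _ _ _ (by omega), Pf_top _ _ _ (by omega), sn_0, sn_1]

theorem Lvec_sn (d : ℕ) (N : Fin (d + 2) → ℤ) :
    Lvec (d + 1) (sn N (N 0 + N 1)) = sn (Lvec d N) 0 := by
  funext j
  refine Fin.lastCases ?_ (fun j => ?_) j
  · rw [sn_last, Lvec_eq', Pf_sn, Pf_sn, Pf_sn]
    simp only [Fin.val_last]
    rw [Pf_top _ _ _ (by omega), Pf_top _ _ _ (by omega), Pf_top _ _ _ (by omega)]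
    ring
  · rw [sn_castSucc, Lvec_eq', Lvec_eq', Pf_sn, Pf_sn, Pf_sn]
    rfl

theorem gR_link (p d : ℕ) (N : Fin (d + 2) → ℤ) :
    gR p (d + 1) (sn N (N 0 + N 1)) = gR p d N := by
  unfold gR
  simp only [qSupL_Sr]
  rw [Lvec_sn, sn_1]
  simp only [Sr_zero]

def baseE : ℤ × ℤ ≃ (Fin 2 → ℤ) where
  toFun x := ![x.2 + x.1, x.2]
  invFun m := (m 0 - m 1, m 1)
  left_inv x := by ext <;> simp
  right_inv m := by
    funext i
    fin_cases i <;> simp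

theorem base (p : ℕ) (hp : 0 < 2 * p - 2) (N : Fin (0 + 2) → ℤ) (hL : ∀ j, 0 ≤ Lvec 0 N j) :
    fL p 0 N = gR p 0 N := by
  have hf := tL_fin p 0 hp _ hL
  have hLe : Lvec 0 N 0 = N 0 + N 1 := by
    have := wt_Lvec 0 N
    simpa [wt] using this
  have h0 : 0 ≤ N 0 + N 1 := hLe ▸ hL 0
  unfold fL gR
  rw [← finsum_comp_equiv baseE, finsum_curry]
  · refine finsum_congr fun a => ?_
    have : ∀ n, tL p 0 N (baseE (a, n)) = Zv a * Qh ((p : ℤ) * a ^ 2) *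
        wd (N 0 + a - p * a) (N 1 - a + p * a) a n := by
      intro n
      have b0 : baseE (a, n) 0 = n + a := rfl
      have b1 : baseE (a, n) 1 = n := rfl
      have A00 : Amat p 0 0 0 = p := by simp [Amat]
      have A01 : Amat p 0 0 1 = -p + 1 := by simp [Amat]
      have A10 : Amat p 0 1 0 = -p + 1 := by simp [Amat]
      have A11 : Amat p 0 1 1 = p := by simp [Amat]
      have r0 : rowA p 0 (baseE (a, n)) 0 = p * a + n := by
        unfold rowA
        rw [Fin.sum_univ_two, b0, b1, A00, A10]; ring
      have r1 : rowA p 0 (baseE (a, n)) 1 = a - p * a + n := by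
        unfold rowA
        rw [Fin.sum_univ_two, b0, b1, A01, A11]; ring
      have hq : qd p 0 (baseE (a, n)) = p * a ^ 2 + 2 * (n * (n + a)) := by
        rw [qd_eq, Fin.sum_univ_two, r0, r1, b0, b1]; ring
      unfold tL wd
      rw [Fin.prod_univ_two, hq, r0, r1, b0, b1, Qh_add]
      have t0 : N 0 + (n + a) - (p * a + n) = N 0 + a - p * a := by ring
      have t1 : N 1 + n - (a - p * a + n) = N 1 - a + p * a := by ring
      have t2 : n + a - n = a := by ring
      rw [t0, t1, t2]
      ring
    rw [finsum_congr this, ← mul_finsum, wd_sum _ _ _ (by linarith), qSupL_Sr, Sr_one, hLe]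
    have t : N 0 + a - p * a + (N 1 - a + p * a) = N 0 + N 1 := by ring
    have t' : N 1 - a + p * a + a = p * a + N 1 := by ring
    rw [t, t', qb_nonneg _ _ h0]
  · exact hf.preimage (f := baseE) (baseE.injective.injOn)

theorem main_eq (p : ℕ) (hp : 2 ≤ p) (d : ℕ) : d < 2 * p - 2 → ∀ N : Fin (d + 2) → ℤ,
    (∀ j, 0 ≤ Lvec d N j) → fL p d N = gR p d N := by
  induction d with
  | zero => exact fun hd N hL => base p hd N hL
  | succ d ih =>
    intro hd
    have key : ∀ l : ℕ, ∀ N : Fin (d + 1 + 2) → ℤ, (∀ j, 0 ≤ Lvec (d + 1) N j) →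
        Lvec (d + 1) N (Fin.last (d + 1)) = l → fL p (d + 1) N = gR p (d + 1) N := by
      intro l
      induction l with
      | zero =>
        intro N hL h0
        have hN : N = sn (ini N) (ini N 0 + ini N 1) := by
          rw [Lvec_eq'] at h0
          simp only [Fin.val_last] at h0
          rw [Pf_top _ _ (d + 1 + 1) (by omega), Pf_top _ _ (d + 1 + 2) (by omega),
            Pf_mid _ _ (d + 1) (by omega) (by omega)] at h0
          have e : (⟨d + 1 + 1, by omega⟩ : Fin (d + 1 + 2)) = Fin.last (d + 2) := rfl
          rw [e] at h0
          have e2 : ini N 0 + ini N 1 = N (Fin.last (d + 2)) := by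
            have : ini N 0 = N 0 := rfl
            have : ini N 1 = N 1 := rfl
            push_cast at h0
            omega
          rw [e2, sn_ini]
        rw [hN] at hL ⊢
        rw [fL_link p d hd _ hL, gR_link]
        refine ih (by omega) _ fun j => ?_
        have := hL j.castSucc
        rwa [Lvec_sn, sn_castSucc] at this
      | succ l ihl =>
        intro N hL hl
        have hA : ∀ j, 0 ≤ Lvec (d + 1) (N - A0 p (d + 1)) j := by
          intro j
          have h1 := hL j
          rw [Lvec_A0 p] at h1 hl
          rw [bump_last] at hl
          unfold bump at h1
          split_ifs at h1 with hj
          · have : j = Fin.last (d + 1) := Fin.ext (by simp; omega)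
            rw [this]; push_cast at hl; omega
          · omega
        have hAl : Lvec (d + 1) (N - A0 p (d + 1)) (Fin.last (d + 1)) = l := by
          rw [Lvec_A0 p, bump_last] at hl
          push_cast at hl; omega
        have hE : ∀ j, 0 ≤ Lvec (d + 1) (N - e0 (d + 1)) j := by
          rw [Lvec_e0 p]
          intro j
          refine Fin.lastCases ?_ (fun j => ?_) j
          · rw [sn_last]; exact hA _
          · rw [sn_castSucc]; exact bump_nonneg (ini_nonneg hA) zero_le_one j
        have hEl : Lvec (d + 1) (N - e0 (d + 1)) (Fin.last (d + 1)) = l := by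
          rw [Lvec_e0 p, sn_last, hAl]
        rw [fL_rec p (d + 1) hd N hE hA, gR_rec p (d + 1) hp N hE hA, ihl _ hE hEl, ihl _ hA hAl]
    intro N hL
    exact key (Lvec (d + 1) N (Fin.last (d + 1))).toNat N hL (Int.toNat_of_nonneg (hL _)).symm

/-- the main identity
`Σ_{n ∈ ℤ^{d+2}} z^{n_+ - n_-} q^{(1/2) n 𝒜 nᵀ} Π_a [e_a·(N + n − n𝒜), e_a·n]⁺_q
  = Σ_{a ∈ ℤ} z^a q^{p a²/2} S^{(d+2)}(L, pa + N_−)_q`,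
including well-definedness (finite support) of both sides. -/
theorem main_identity (p d : ℕ) (hp : 2 ≤ p) (hd : d < 2 * p - 2)
    (N : Fin (d + 2) → ℤ) (hL : ∀ j, 0 ≤ Lvec d N j) :
    (Function.support (fun n : Fin (d + 2) → ℤ =>
        Zv (n 0 - n 1) * Qh (∑ i, ∑ j, n i * Amat p d i j * n j) *
          ∏ a, qbinPlusL (N a + n a - rowA p d n a) (n a))).Finite ∧
    (Function.support (fun a : ℤ =>
        Zv a * Qh ((p : ℤ) * a ^ 2) * qSupL (Lvec d N) ((p : ℤ) * a + N 1))).Finite ∧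
    (∑ᶠ n : Fin (d + 2) → ℤ,
        Zv (n 0 - n 1) * Qh (∑ i, ∑ j, n i * Amat p d i j * n j) *
          ∏ a, qbinPlusL (N a + n a - rowA p d n a) (n a)) =
      ∑ᶠ a : ℤ, Zv a * Qh ((p : ℤ) * a ^ 2) * qSupL (Lvec d N) ((p : ℤ) * a + N 1) := by
  exact ⟨tL_fin p d hd N hL, gR_fin p d hp N hL, main_eq p hp d hd N hL⟩

end
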